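/- arXiv:2501.11466 — 2 statements merged into one kernel-verified Lean document; each statement's English description precedes it below -/
import Mathlib

section
/- Let n ≥ 4 and 2 ≤ k ≤ n−2 be integers, let A be an (n−k)×n matrix over ℂ with y_{i,j}(A) ≠ 0 for all 0 ≤ i ≤ n−k and 0 ≤ j ≤ k, and let c be an integer with −⌈(k−2)/2⌉ ≤ c ≤ ⌊(n−k−2)/2⌋. Then p_{J⁺_{k+c}}(A) / p_{J_{k+c}}(A) = Σ_{(a,b) : a−b = 2c, 0 ≤ a ≤ n−k−1, 1 ≤ b ≤ k−1} ( y_{a,b+1} y_{a+1,b−1} )/( y_{a,b} y_{a+1,b} ) + Σ_{(a,b) : a−b = 2c, 1 ≤ a ≤ n−k−1, 1 ≤ b ≤ k} ( y_{a−1,b} y_{a+1,b−1} )/( y_{a,b−1} y_{a,b} ), where all y's are evaluated at A. -/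
open Finset

/-- The set `[m] = {1, …, m} ⊆ ℤ/nℤ` (with `[0] = ∅`). -/
def seg (n m : ℕ) : Finset (ZMod n) := (Finset.Icc 1 m).image (fun t : ℕ => (t : ZMod n))

/-- The Plücker coordinate `p_J(A)` of an `r×n` matrix `A` whose columns are indexed by
`ℤ/nℤ`: the determinant of the `r×r` submatrix of `A` formed by the columns indexed by
`J`, ordered by the representatives `1, …, n` in increasing order (and `0` if `J` does
not have exactly `r` elements).  The auxiliary key `x ↦ (x−1).val` is order-isomorphic
to the representative in `{1, …, n}`. -/
noncomputable def plucker (n r : ℕ) (A : Matrix (Fin r) (ZMod n) ℂ)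
    (J : Finset (ZMod n)) : ℂ :=
  if h : (J.image (fun x => (x - 1).val)).card = r then
    (A.submatrix id
      (fun i => ((((J.image (fun x => (x - 1).val)).orderIsoOfFin h i :
        (J.image (fun x => (x - 1).val))) : ℕ) : ZMod n) + 1)).det
  else 0

/-- The cyclic interval `J_i = {i+1, …, i+(n−k)} ⊆ ℤ/nℤ`. -/
def Jcyc (n k : ℕ) (i : ZMod n) : Finset (ZMod n) :=
  (Finset.Icc 1 (n - k)).image (fun t : ℕ => i + (t : ZMod n))

/-- `J_i⁺ = (J_i ∖ {i+n−k}) ∪ {i+n−k+1}`. -/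
def Jplus (n k : ℕ) (i : ZMod n) : Finset (ZMod n) :=
  insert (i + (((n - k + 1 : ℕ)) : ZMod n)) ((Jcyc n k i).erase (i + (((n - k : ℕ)) : ZMod n)))

/-- The checkboard label `J^ch_{i,j} = σ^{−⌈(i+j)/2⌉}( [i] ∪ ([n−k+j]∖[i+j]) )`. -/
def Jch (k n i j : ℕ) : Finset (ZMod n) :=
  (seg n i ∪ (seg n (n - k + j) \ seg n (i + j))).image
    (fun x => x - (((i + j + 1) / 2 : ℕ) : ZMod n))

/-- The Plücker coordinates `y_{i,j}` attached to the checkboard graph. -/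
noncomputable def ych (k n : ℕ) (A : Matrix (Fin (n - k)) (ZMod n) ℂ) (i j : ℕ) : ℂ :=
  plucker n (n - k) A (Jch k n i j)

/-- First sum appearing in the superpotential formulas:
`Σ_{a−b=d, 0 ≤ a ≤ n−k−1, 1 ≤ b ≤ k−1} (y_{a,b+1} y_{a+1,b−1})/(y_{a,b} y_{a+1,b})`. -/
noncomputable def sumA (k n : ℕ) (y : ℕ → ℕ → ℂ) (d : ℤ) : ℂ :=
  ∑ p ∈ ((Finset.range (n - k)) ×ˢ (Finset.Icc 1 (k - 1))).filter
      (fun p => (p.1 : ℤ) - (p.2 : ℤ) = d),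
    (y p.1 (p.2 + 1) * y (p.1 + 1) (p.2 - 1)) / (y p.1 p.2 * y (p.1 + 1) p.2)

/-- Second sum appearing in the superpotential formulas:
`Σ_{a−b=d, 1 ≤ a ≤ n−k−1, 1 ≤ b ≤ k} (y_{a−1,b} y_{a+1,b−1})/(y_{a,b−1} y_{a,b})`. -/
noncomputable def sumB (k n : ℕ) (y : ℕ → ℕ → ℂ) (d : ℤ) : ℂ :=
  ∑ p ∈ ((Finset.Icc 1 (n - k - 1)) ×ˢ (Finset.Icc 1 k)).filter
      (fun p => (p.1 : ℤ) - (p.2 : ℤ) = d),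
    (y (p.1 - 1) p.2 * y (p.1 + 1) (p.2 - 1)) / (y p.1 (p.2 - 1) * y p.1 p.2)


theorem three_det (m : ℕ) (e : Fin m → Fin (m+2) → ℂ) (w x y z : Fin (m+2) → ℂ)
    (f : (Fin (m+2) → ℂ) → (Fin (m+2) → ℂ) → ℂ)
    (hf : ∀ u v, f u v = (Matrix.of (Fin.cons u (Fin.cons v e : Fin (m+1) → Fin (m+2) → ℂ) :
      Fin (m+2) → Fin (m+2) → ℂ)).det) :
    f w y * f x z = f w x * f y z + f w z * f x y := by
  set col : Fin (m+3) → Fin (m+2) → ℂ := Fin.cons w (Fin.cons x (Fin.cons y e : Fin (m+1) → Fin (m+2) → ℂ) :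
      Fin (m+2) → Fin (m+2) → ℂ) with hcol
  obtain ⟨c, hc⟩ : ∃ c : Fin (m+2) → ℂ, ∀ v, f v z = ∑ j, v j * c j := by
    refine ⟨fun j => (-1) ^ (j : ℕ) * ((Matrix.of (Fin.cons z e : Fin (m+1) → Fin (m+2) → ℂ)).submatrix id j.succAbove).det, ?_⟩
    intro v
    rw [hf, Matrix.det_succ_row_zero]
    refine Finset.sum_congr rfl fun j _ => ?_
    have : ((Matrix.of (Fin.cons v (Fin.cons z e : Fin (m+1) → Fin (m+2) → ℂ) :
      Fin (m+2) → Fin (m+2) → ℂ)).submatrix Fin.succ j.succAbove) =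
      ((Matrix.of (Fin.cons z e : Fin (m+1) → Fin (m+2) → ℂ)).submatrix id j.succAbove) := by
      ext a b; simp
    rw [this]
    simp only [Matrix.of_apply, Fin.cons_zero]
    ring
  let M : Matrix (Fin (m+3)) (Fin (m+3)) ℂ := Matrix.of fun i => Fin.cons (f (col i) z) (col i)
  have hM : M.det = 0 := by
    rw [← Matrix.exists_mulVec_eq_zero_iff]
    refine ⟨Fin.cons 1 (fun j => - c j), ?_, ?_⟩
    · intro h
      have := congrFun h 0
      simp at this
    · ext i
      simp only [Matrix.mulVec, dotProduct, M, Matrix.of_apply]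
      rw [Fin.sum_univ_succ]
      simp [hc]
  rw [Matrix.det_succ_column_zero, Fin.sum_univ_succ, Fin.sum_univ_succ, Fin.sum_univ_succ] at hM
  have hrest : ∀ i : Fin m, f (e i) z = 0 := by
    intro i
    rw [hf]
    apply Matrix.det_zero_of_row_eq (i := 0) (j := i.succ.succ)
    · exact (Fin.succ_ne_zero _).symm
    · ext j; simp [Matrix.of_apply]
  have h0 : (M.submatrix (Fin.succAbove 0) Fin.succ).det = f x y := by
    rw [hf]; congr 1
  have h1 : (M.submatrix (Fin.succAbove (Fin.succ 0)) Fin.succ).det = f w y := by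
    rw [hf]; congr 1
    ext a b
    refine Fin.cases ?_ (fun a => ?_) a
    · simp [M, hcol]
    · simp [M, hcol]
  have t1 : (Fin.succ (Fin.succ 0) : Fin (m+3)).succAbove (Fin.succ 0) = Fin.succ 0 := by
    rw [Fin.succ_succAbove_succ, Fin.succ_succAbove_zero]
  have t2 : ∀ a : Fin m, (Fin.succ (Fin.succ 0) : Fin (m+3)).succAbove (Fin.succ (Fin.succ a)) = a.succ.succ.succ := by
    intro a
    rw [Fin.succ_succAbove_succ, Fin.succ_succAbove_succ, Fin.succAbove_zero]
  have h2 : (M.submatrix (Fin.succAbove (Fin.succ (Fin.succ 0))) Fin.succ).det = f w x := by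
    rw [hf]; congr 1
    ext a b
    have hb : ∀ a, M.submatrix (Fin.succAbove (Fin.succ (Fin.succ 0))) Fin.succ a b =
      col ((Fin.succ (Fin.succ 0) : Fin (m+3)).succAbove a) b := fun a => rfl
    rw [hb]
    refine Fin.cases ?_ (fun a => ?_) a
    · rw [Fin.succ_succAbove_zero]; rfl
    · refine Fin.cases ?_ (fun a => ?_) a
      · rw [t1]; rfl
      · rw [t2]; rfl
  rw [h0, h1, h2] at hM
  have hs : ∑ i : Fin m, (-1) ^ ((i.succ.succ.succ : Fin (m+3)) : ℕ) * M i.succ.succ.succ 0 *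
      (M.submatrix (Fin.succAbove i.succ.succ.succ) Fin.succ).det = 0 := by
    refine Finset.sum_eq_zero fun i _ => ?_
    have : M i.succ.succ.succ 0 = 0 := by simp [M, hcol, hrest]
    rw [this]; ring
  have g0 : M 0 0 = f w z := rfl
  have g1 : M (Fin.succ 0) 0 = f x z := rfl
  have g2 : M (Fin.succ (Fin.succ 0)) 0 = f y z := rfl
  rw [hs, g0, g1, g2] at hM
  simp only [Fin.val_succ, Fin.val_zero] at hM
  linear_combination -hM

noncomputable def qv (r : ℕ) (B : ℕ → Fin r → ℂ) (K : Finset ℕ) : ℂ :=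
  if h : K.card = r then (Matrix.of fun i => B (K.orderEmbOfFin h i)).det else 0

theorem plucker_eq_qv (n r : ℕ) (A : Matrix (Fin r) (ZMod n) ℂ) (J : Finset (ZMod n)) :
    plucker n r A J = qv r (fun m i => A i ((m : ZMod n) + 1)) (J.image (fun x => (x - 1).val)) := by
  unfold plucker qv
  split_ifs with h
  · rw [← Matrix.det_transpose]; rfl
  · rfl

theorem qv_eq (r : ℕ) (B : ℕ → Fin r → ℂ) (K : Finset ℕ) (g : Fin r → ℕ)
    (hg : Function.Injective g) (hK : Finset.univ.image g = K) :
    qv r B K = (((SignType.sign (Matrix.vandermonde (fun i => (g i : ℤ))).det : SignType) : ℤ) : ℂ) *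
      (Matrix.of fun i => B (g i)).det := by
  have hc : K.card = r := by rw [← hK, Finset.card_image_of_injective _ hg]; simp
  unfold qv
  rw [dif_pos hc]
  have hmem : ∀ i, g i ∈ K := fun i => by rw [← hK]; simp
  let τ : Fin r → Fin r := fun i => (K.orderIsoOfFin hc).symm ⟨g i, hmem i⟩
  have hτ : ∀ i, K.orderEmbOfFin hc (τ i) = g i := fun i => by
    simp [τ, ← Finset.coe_orderIsoOfFin_apply]
  have hinj : Function.Injective τ := fun i j h => hg (by rw [← hτ, ← hτ, h])
  let σ : Equiv.Perm (Fin r) := Equiv.ofBijective τ (Finite.injective_iff_bijective.mp hinj)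
  have hσ : ∀ i, K.orderEmbOfFin hc (σ i) = g i := hτ
  have e1 : (Matrix.of fun i => B (g i)).det = ((Equiv.Perm.sign σ : ℤ) : ℂ) *
      (Matrix.of fun i => B (K.orderEmbOfFin hc i)).det := by
    rw [← Matrix.det_permute]
    congr 1; ext i j; simp [hσ]
  have e2 : (Matrix.vandermonde (fun i => (g i : ℤ))).det = (Equiv.Perm.sign σ : ℤ) *
      (Matrix.vandermonde (fun i => ((K.orderEmbOfFin hc i : ℕ) : ℤ))).det := by
    have := Matrix.det_permute σ (Matrix.vandermonde (fun i => ((K.orderEmbOfFin hc i : ℕ) : ℤ)))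
    simp only [Int.cast_id] at this
    rw [← this]
    congr 1; ext i j; simp [hσ, Matrix.vandermonde]
  have e3 : 0 < (Matrix.vandermonde (fun i => ((K.orderEmbOfFin hc i : ℕ) : ℤ))).det := by
    rw [Matrix.det_vandermonde]
    refine Finset.prod_pos fun i _ => Finset.prod_pos fun j hj => ?_
    have := (K.orderEmbOfFin hc).strictMono (Finset.mem_Ioi.mp hj)
    omega
  rw [e1, e2, sign_mul, sign_pos e3]
  rcases Int.units_eq_one_or (Equiv.Perm.sign σ) with h | h <;> rw [h] <;> simp

theorem qv_insert2 (m : ℕ) (B : ℕ → Fin (m+2) → ℂ) (K : Finset ℕ) (hK : K.card = m) :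
    ∃ E : ℕ → ℂ, ∃ s : ℂ, ∀ u v, u < v → u ∉ K → v ∉ K → qv (m+2) B (insert u (insert v K)) =
      E u * E v * s * (Matrix.of (Fin.cons (B u) (Fin.cons (B v) (fun i => B (K.orderEmbOfFin hK i)) : Fin (m+1) → Fin (m+2) → ℂ) :
      Fin (m+2) → Fin (m+2) → ℂ)).det := by
  set e := K.orderEmbOfFin hK with he
  refine ⟨fun u => (((SignType.sign (∏ i, ((e i : ℤ) - (u:ℤ))) : SignType) : ℤ) : ℂ),
    (((SignType.sign (Matrix.vandermonde (fun i => (e i : ℤ))).det : SignType) : ℤ) : ℂ), ?_⟩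
  intro u v huv hu hv
  have hmem : ∀ i, e i ∈ K := fun i => Finset.orderEmbOfFin_mem K hK i
  rw [qv_eq (m+2) B _ (Fin.cons u (Fin.cons v e : Fin (m+1) → ℕ))]
  · have : (Matrix.of fun i => B ((Fin.cons u (Fin.cons v e : Fin (m+1) → ℕ) : Fin (m+2) → ℕ) i)) =
     (Matrix.of (Fin.cons (B u) (Fin.cons (B v) (fun i => B (e i)) : Fin (m+1) → Fin (m+2) → ℂ) :
      Fin (m+2) → Fin (m+2) → ℂ)) := by
      ext i j
      refine Fin.cases ?_ (fun i => ?_) i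
      · simp
      · refine Fin.cases ?_ (fun i => ?_) i <;> simp
    rw [this]
    congr 1
    have hvd : (Matrix.vandermonde (fun i => (((Fin.cons u (Fin.cons v e : Fin (m+1) → ℕ) : Fin (m+2) → ℕ) i : ℕ) : ℤ))).det
       = ((v:ℤ) - u) * ((∏ i, ((e i : ℤ) - (u:ℤ))) * (∏ i, ((e i : ℤ) - (v:ℤ))) * (Matrix.vandermonde (fun i => (e i : ℤ))).det) := by
      simp only [Matrix.det_vandermonde, Fin.prod_univ_succ, Fin.prod_Ioi_zero, Fin.prod_Ioi_succ, Fin.cons_zero, Fin.cons_succ]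
      ring
    rw [hvd, sign_mul, sign_pos (by omega : (0:ℤ) < v - u), sign_mul, sign_mul]
    simp
  · rw [Fin.cons_injective_iff, Fin.cons_injective_iff]
    refine ⟨?_, ?_, e.injective⟩
    · rintro ⟨i, hi⟩
      revert hi
      refine Fin.cases ?_ (fun i => ?_) i
      · simp; omega
      · simp; rintro rfl; exact hu (hmem _)
    · rintro ⟨i, rfl⟩; exact hv (hmem _)
  · have : Finset.univ.image e = K := by
      apply Finset.coe_injective; simp [he]
    ext t
    rw [← this]
    simp only [Finset.mem_image, Finset.mem_univ, true_and, Fin.exists_fin_succ, Fin.cons_zero, Fin.cons_succ, Finset.mem_insert]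
    tauto

theorem qv_three (r : ℕ) (B : ℕ → Fin r → ℂ) (K : Finset ℕ) (hK : r = K.card + 2)
    (w x y z : ℕ) (hwx : w < x) (hxy : x < y) (hyz : y < z) (hw : w ∉ K) (hx : x ∉ K)
    (hy : y ∉ K) (hz : z ∉ K) :
    qv r B (insert w (insert y K)) * qv r B (insert x (insert z K)) =
     qv r B (insert w (insert x K)) * qv r B (insert y (insert z K)) +
     qv r B (insert w (insert z K)) * qv r B (insert x (insert y K)) := by
  subst hK
  obtain ⟨E, s, h⟩ := qv_insert2 K.card B K rfl
  rw [h w y, h x z, h w x, h y z, h w z, h x y] <;> try first | assumption | omega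
  have := three_det K.card (fun i => B (K.orderEmbOfFin rfl i)) (B w) (B x) (B y) (B z) _ (fun u v => rfl)
  linear_combination (E w * E x * E y * E z * s ^ 2) * this

noncomputable def PZ (n r : ℕ) (A : Matrix (Fin r) (ZMod n) ℂ) (F : Finset ℤ) : ℂ :=
  plucker n r A (F.image (fun x : ℤ => (x : ZMod n)))

def keyZ (n : ℕ) (x : ℤ) : ℕ := ((x - 1) % (n : ℤ)).toNat

theorem PZ_eq (n r : ℕ) [NeZero n] (A : Matrix (Fin r) (ZMod n) ℂ) (F : Finset ℤ) :
    PZ n r A F = qv r (fun m i => A i ((m : ZMod n) + 1))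
      (F.image (keyZ n)) := by
  unfold PZ
  rw [plucker_eq_qv, Finset.image_image]
  congr 2
  ext x
  have := ZMod.val_intCast (n := n) (x - 1)
  push_cast at this
  simp only [Function.comp, keyZ]
  omega

theorem key_window (n : ℕ) (hn : 0 < n) (t : ℤ) : ∃ q : ℤ, 0 ≤ t - 1 - q ∧ t - 1 - q < n ∧
    ∀ u : ℤ, t ≤ u → u < t + n →
      ((u - 1 - q < n → (((((u - 1) % (n : ℤ)).toNat : ℕ)) : ℤ) = u - 1 - q) ∧
       (n ≤ u - 1 - q → (((((u - 1) % (n : ℤ)).toNat : ℕ)) : ℤ) = u - 1 - q - n)) := by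
  have hn' : (0 : ℤ) < n := by exact_mod_cast hn
  have h1 := Int.emod_add_mul_ediv (t - 1) n
  have h2 := Int.emod_nonneg (t - 1) hn'.ne'
  have h3 := Int.emod_lt_of_pos (t - 1) hn'
  refine ⟨n * ((t - 1) / n), by omega, by omega, ?_⟩
  intro u hu1 hu2
  have e : ∀ q : ℤ, 0 ≤ u - 1 - n * q → u - 1 - n * q < n → (u - 1) % (n : ℤ) = u - 1 - n * q := by
    intro q ha hb
    have := Int.emod_eq_of_lt ha hb
    rw [← this]
    simp
  constructor
  · intro h
    rw [e _ (by omega) h]; omega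
  · intro h
    have e2 : (n : ℤ) * ((t - 1) / n + 1) = n * ((t - 1) / n) + n := by ring
    rw [e ((t - 1) / n + 1) (by omega) (by omega)]; omega

theorem PZ_three (n r : ℕ) (hn : 0 < n) (A : Matrix (Fin r) (ZMod n) ℂ) (S : Finset ℤ) (t : ℤ)
    (hS : ∀ s ∈ S, t ≤ s ∧ s < t + n) (hr : r = S.card + 2) (w x y z : ℤ) (htw : t ≤ w)
    (hwx : w < x) (hxy : x < y) (hyz : y < z) (hzt : z < t + n) (hw : w ∉ S) (hx : x ∉ S)
    (hy : y ∉ S) (hz : z ∉ S) :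
    PZ n r A (insert w (insert y S)) * PZ n r A (insert x (insert z S)) =
     PZ n r A (insert w (insert x S)) * PZ n r A (insert y (insert z S)) +
     PZ n r A (insert w (insert z S)) * PZ n r A (insert x (insert y S)) := by
  have : NeZero n := ⟨hn.ne'⟩
  simp only [PZ_eq, Finset.image_insert]
  obtain ⟨q, hq1, hq2, hq⟩ := key_window n hn t
  have hq' : ∀ u : ℤ, t ≤ u → u < t + n →
      ((u - 1 - q < n → ((keyZ n u : ℕ) : ℤ) = u - 1 - q) ∧
       (n ≤ u - 1 - q → ((keyZ n u : ℕ) : ℤ) = u - 1 - q - n)) := hq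
  generalize keyZ n = κ at *
  have hinj : ∀ u v : ℤ, t ≤ u → u < t + n → t ≤ v → v < t + n → κ u = κ v → u = v := by
    intro u v h1 h2 h3 h4 h5
    have := hq' u h1 h2
    have := hq' v h3 h4
    omega
  have hcard : (S.image κ).card = S.card := Finset.card_image_of_injOn (fun u hu v hv h =>
    hinj u v (hS u hu).1 (hS u hu).2 (hS v hv).1 (hS v hv).2 h)
  have hnot : ∀ u, t ≤ u → u < t + n → u ∉ S → κ u ∉ S.image κ := by
    intro u h1 h2 h3 h4
    obtain ⟨v, hv, hvu⟩ := Finset.mem_image.mp h4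
    exact h3 (hinj v u (hS v hv).1 (hS v hv).2 h1 h2 hvu ▸ hv)
  have nw := hnot w (by omega) (by omega) hw
  have nx := hnot x (by omega) (by omega) hx
  have ny := hnot y (by omega) (by omega) hy
  have nz := hnot z (by omega) (by omega) hz
  have qw := hq' w (by omega) (by omega)
  have qx := hq' x (by omega) (by omega)
  have qy := hq' y (by omega) (by omega)
  have qz := hq' z (by omega) (by omega)
  rw [← hcard] at hr
  generalize S.image κ = K at *
  generalize κ w = w' at *
  generalize κ x = x' at *
  generalize κ y = y' at *
  generalize κ z = z' at *
  generalize (fun (m : ℕ) (i : Fin r) => A i ((m : ZMod n) + 1)) = B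
  by_cases c4 : n ≤ w - 1 - q
  · exact qv_three r B K hr w' x' y' z' (by omega) (by omega) (by omega) nw nx ny nz
  by_cases c3 : n ≤ x - 1 - q
  · have := qv_three r B K hr x' y' z' w' (by omega) (by omega) (by omega) nx ny nz nw
    rw [Finset.insert_comm y' w', Finset.insert_comm z' w', Finset.insert_comm x' w'] at this
    linear_combination this
  by_cases c2 : n ≤ y - 1 - q
  · have := qv_three r B K hr y' z' w' x' (by omega) (by omega) (by omega) ny nz nw nx
    rw [Finset.insert_comm y' w', Finset.insert_comm z' w', Finset.insert_comm y' x', Finset.insert_comm z' x'] at this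
    linear_combination this
  by_cases c1 : n ≤ z - 1 - q
  · have := qv_three r B K hr z' w' x' y' (by omega) (by omega) (by omega) nz nw nx ny
    rw [Finset.insert_comm z' x', Finset.insert_comm z' w', Finset.insert_comm z' y'] at this
    linear_combination this
  · exact qv_three r B K hr w' x' y' z' (by omega) (by omega) (by omega) nw nx ny nz

theorem Jch_eq (k n i j : ℕ) (hkn : k ≤ n) (hi : i ≤ n - k) (hj : j ≤ k) :
    Jch k n i j = (Finset.Icc (1 - (((i + j + 1) / 2 : ℕ) : ℤ)) (i - (((i + j + 1) / 2 : ℕ) : ℤ)) ∪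
      Finset.Icc (i + j + 1 - (((i + j + 1) / 2 : ℕ) : ℤ)) (n - k + j - (((i + j + 1) / 2 : ℕ) : ℤ))).image
        (fun x : ℤ => (x : ZMod n)) := by
  unfold Jch
  generalize (i + j + 1) / 2 = s
  have hseg : seg n (n - k + j) \ seg n (i + j) =
      (Finset.Icc (i + j + 1) (n - k + j)).image (fun t : ℕ => (t : ZMod n)) := by
    ext x
    simp only [seg, Finset.mem_sdiff, Finset.mem_image, Finset.mem_Icc]
    constructor
    · rintro ⟨⟨t, ht, rfl⟩, h⟩
      refine ⟨t, ⟨?_, ht.2⟩, rfl⟩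
      by_contra hlt
      exact h ⟨t, by omega, rfl⟩
    · rintro ⟨t, ht, rfl⟩
      refine ⟨⟨t, by omega, rfl⟩, ?_⟩
      rintro ⟨u, hu, hut⟩
      have h1 : ((u : ℤ) : ZMod n) = ((t : ℤ) : ZMod n) := by exact_mod_cast hut
      rw [ZMod.intCast_eq_intCast_iff_dvd_sub] at h1
      have := Int.le_of_dvd (by omega) h1
      omega
  rw [hseg, seg, ← Finset.image_union, Finset.image_image]
  ext x
  simp only [Finset.mem_image, Finset.mem_union, Finset.mem_Icc, Function.comp]
  constructor
  · rintro ⟨t, ht, rfl⟩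
    refine ⟨t - s, by omega, by push_cast; ring⟩
  · rintro ⟨t, ht, rfl⟩
    refine ⟨(t + s).toNat, by omega, ?_⟩
    have : (((t + s).toNat : ℤ) : ZMod n) = ((t + s : ℤ) : ZMod n) := by
      rw [Int.toNat_of_nonneg (by omega)]
    have h2 : (((t + s).toNat : ℕ) : ZMod n) = ((t + s : ℤ) : ZMod n) := by exact_mod_cast this
    rw [h2]; push_cast; ring

theorem ych_eq (k n : ℕ) (A : Matrix (Fin (n - k)) (ZMod n) ℂ) (i j : ℕ) (hkn : k ≤ n)
    (hi : i ≤ n - k) (hj : j ≤ k) (l1 u1 l2 u2 : ℤ)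
    (h1 : l1 = 1 - (((i + j + 1) / 2 : ℕ) : ℤ)) (h2 : u1 = i - (((i + j + 1) / 2 : ℕ) : ℤ))
    (h3 : l2 = i + j + 1 - (((i + j + 1) / 2 : ℕ) : ℤ))
    (h4 : u2 = n - k + j - (((i + j + 1) / 2 : ℕ) : ℤ)) :
    ych k n A i j = PZ n (n - k) A (Finset.Icc l1 u1 ∪ Finset.Icc l2 u2) := by
  rw [ych, Jch_eq k n i j hkn hi hj, h1, h2, h3, h4]; rfl

theorem PZ_congr (n r : ℕ) (A : Matrix (Fin r) (ZMod n) ℂ) (F G : Finset ℤ)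
    (h1 : ∀ x ∈ F, x ∈ G ∨ x - n ∈ G ∨ x + n ∈ G) (h2 : ∀ x ∈ G, x ∈ F ∨ x - n ∈ F ∨ x + n ∈ F) :
    PZ n r A F = PZ n r A G := by
  have key : ∀ F G : Finset ℤ, (∀ x ∈ F, x ∈ G ∨ x - n ∈ G ∨ x + n ∈ G) →
      F.image (fun x : ℤ => (x : ZMod n)) ⊆ G.image (fun x : ℤ => (x : ZMod n)) := by
    intro F G h y hy
    obtain ⟨x, hx, rfl⟩ := Finset.mem_image.mp hy
    rcases h x hx with h | h | h
    · exact Finset.mem_image.mpr ⟨_, h, rfl⟩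
    · exact Finset.mem_image.mpr ⟨_, h, by simp⟩
    · exact Finset.mem_image.mpr ⟨_, h, by simp⟩
  unfold PZ
  rw [Finset.Subset.antisymm (key F G h1) (key G F h2)]

theorem Jcyc_eq (n k : ℕ) (A : Matrix (Fin (n - k)) (ZMod n) ℂ) (c : ℤ) (hkn : k ≤ n) :
    plucker n (n - k) A (Jcyc n k ((((k : ℤ) + c : ℤ)) : ZMod n)) =
      PZ n (n - k) A (Finset.Icc (k + c + 1) (n + c)) := by
  unfold PZ
  congr 1
  ext x
  simp only [Jcyc, Finset.mem_image, Finset.mem_Icc]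
  constructor
  · rintro ⟨t, ht, rfl⟩
    exact ⟨k + c + t, by omega, by push_cast; ring⟩
  · rintro ⟨t, ht, rfl⟩
    refine ⟨(t - k - c).toNat, by omega, ?_⟩
    obtain ⟨m, hm⟩ := Int.eq_ofNat_of_zero_le (show 0 ≤ t - k - c by omega)
    have : t = k + c + m := by omega
    subst this
    rw [hm]; simp

theorem Jplus_eq (n k : ℕ) (A : Matrix (Fin (n - k)) (ZMod n) ℂ) (c : ℤ) (hkn : k + 1 ≤ n) :
    plucker n (n - k) A (Jplus n k ((((k : ℤ) + c : ℤ)) : ZMod n)) =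
      PZ n (n - k) A (insert (n + c + 1) (Finset.Icc (k + c + 1) (n + c - 1))) := by
  unfold PZ
  congr 1
  rw [Jplus, Finset.image_insert]
  have e1 : ((((k : ℤ) + c : ℤ)) : ZMod n) + ((n - k + 1 : ℕ) : ZMod n) = ((n + c + 1 : ℤ) : ZMod n) := by
    have : (n : ℤ) + c + 1 = k + c + ((n - k + 1 : ℕ) : ℤ) := by omega
    rw [this, Int.cast_add (k + c : ℤ), Int.cast_natCast]
  rw [e1]
  congr 1
  ext x
  simp only [Jcyc, Finset.mem_erase, Finset.mem_image, Finset.mem_Icc]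
  constructor
  · rintro ⟨hne, t, ht, rfl⟩
    have : t ≠ n - k := by rintro rfl; exact hne rfl
    exact ⟨k + c + t, by omega, by push_cast; ring⟩
  · rintro ⟨t, ht, rfl⟩
    constructor
    · intro h
      have h1 : ((t : ℤ) : ZMod n) = ((k + c + (n - k : ℕ) : ℤ) : ZMod n) := by
        rw [h]; push_cast; ring
      rw [ZMod.intCast_eq_intCast_iff_dvd_sub] at h1
      have := Int.le_of_dvd (by omega) h1
      omega
    · refine ⟨(t - k - c).toNat, by omega, ?_⟩
      obtain ⟨m, hm⟩ := Int.eq_ofNat_of_zero_le (show 0 ≤ t - k - c by omega)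
      have : t = k + c + m := by omega
      subst this
      rw [hm]; simp

theorem baseS_card (n k : ℕ) (c s : ℤ) (hkn : k + 2 ≤ n) (h1 : 1 ≤ s + c) (h2 : s + c ≤ n - k - 1)
    (h3 : 1 ≤ s - c) :
    n - k = (Finset.Icc (1 - s) (c - 1) ∪ Finset.Icc (s + 1) (n - k - c - 1)).card + 2 := by
  rw [Finset.card_union_of_disjoint]
  · simp only [Int.card_Icc]; omega
  · rw [Finset.disjoint_left]
    intro x; simp only [Finset.mem_Icc]; omega

theorem stepA (n k : ℕ) (A : Matrix (Fin (n - k)) (ZMod n) ℂ) (c s : ℤ) (hkn : k + 2 ≤ n)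
    (h1 : 1 ≤ s + c) (h2 : s + c ≤ n - k - 1)
    (h3 : 1 ≤ s - c) (h4 : s - c ≤ k - 1) (h5 : 2 * c + 2 ≤ n - k) :
    PZ n (n - k) A (insert (c + 1) (Finset.Icc (-s) (c - 1) ∪ Finset.Icc (s + 1) (n - k - c - 1))) *
      PZ n (n - k) A (Finset.Icc (1 - s) c ∪ Finset.Icc (s + 1) (n - k - c)) =
    PZ n (n - k) A (Finset.Icc (-s) c ∪ Finset.Icc (s + 1) (n - k - c - 1)) *
      PZ n (n - k) A (insert (c + 1) (Finset.Icc (1 - s) (c - 1) ∪ Finset.Icc (s + 1) (n - k - c))) +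
    PZ n (n - k) A (Finset.Icc (-s) (c - 1) ∪ Finset.Icc (s + 1) (n - k - c)) *
      PZ n (n - k) A (Finset.Icc (1 - s) (c + 1) ∪ Finset.Icc (s + 1) (n - k - c - 1)) := by
  have := PZ_three n (n - k) (by omega) A
    (Finset.Icc (1 - s) (c - 1) ∪ Finset.Icc (s + 1) (n - k - c - 1)) (-s)
    (by intro x; simp only [Finset.mem_union, Finset.mem_Icc]; omega)
    (baseS_card n k c s hkn h1 h2 h3) (-s) c (c + 1) (n - k - c) (by omega) (by omega) (by omega)
    (by omega) (by omega)
    (by simp only [Finset.mem_union, Finset.mem_Icc]; omega)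
    (by simp only [Finset.mem_union, Finset.mem_Icc]; omega)
    (by simp only [Finset.mem_union, Finset.mem_Icc]; omega)
    (by simp only [Finset.mem_union, Finset.mem_Icc]; omega)
  convert this using 3 <;> ((try refine congrArg (PZ n (n - k) A) ?_); ext x; simp only [Finset.mem_insert, Finset.mem_union, Finset.mem_Icc]; omega)

theorem stepB (n k : ℕ) (A : Matrix (Fin (n - k)) (ZMod n) ℂ) (c s : ℤ) (hkn : k + 2 ≤ n)
    (h1 : 1 ≤ s + c) (h2 : s + c ≤ n - k - 1)
    (h3 : 2 ≤ s - c) (h4 : s - c ≤ k) (h5 : 2 * c + 2 ≤ n - k) :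
    PZ n (n - k) A (Finset.Icc (1 - s) c ∪ Finset.Icc s (n - k - c - 1)) *
      PZ n (n - k) A (insert (c + 1) (Finset.Icc (1 - s) (c - 1) ∪ Finset.Icc (s + 1) (n - k - c))) =
    PZ n (n - k) A (Finset.Icc (1 - s) (c + 1) ∪ Finset.Icc (s + 1) (n - k - c - 1)) *
      PZ n (n - k) A (Finset.Icc (1 - s) (c - 1) ∪ Finset.Icc s (n - k - c)) +
    PZ n (n - k) A (Finset.Icc (1 - s) c ∪ Finset.Icc (s + 1) (n - k - c)) *
      PZ n (n - k) A (insert (c + 1) (Finset.Icc (1 - s) (c - 1) ∪ Finset.Icc s (n - k - c - 1))) := by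
  have := PZ_three n (n - k) (by omega) A
    (Finset.Icc (1 - s) (c - 1) ∪ Finset.Icc (s + 1) (n - k - c - 1)) (1 - s)
    (by intro x; simp only [Finset.mem_union, Finset.mem_Icc]; omega)
    (baseS_card n k c s hkn h1 h2 (by omega)) c (c + 1) s (n - k - c) (by omega) (by omega) (by omega)
    (by omega) (by omega)
    (by simp only [Finset.mem_union, Finset.mem_Icc]; omega)
    (by simp only [Finset.mem_union, Finset.mem_Icc]; omega)
    (by simp only [Finset.mem_union, Finset.mem_Icc]; omega)
    (by simp only [Finset.mem_union, Finset.mem_Icc]; omega)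
  convert this using 3 <;> ((try refine congrArg (PZ n (n - k) A) ?_); ext x; simp only [Finset.mem_insert, Finset.mem_union, Finset.mem_Icc]; omega)

noncomputable def alphaT (k n : ℕ) (y : ℕ → ℕ → ℂ) (c : ℤ) (b : ℕ) : ℂ :=
  if 0 ≤ b + 2 * c ∧ b + 2 * c ≤ n - k - 1 ∧ 1 ≤ b ∧ b + 1 ≤ k then
    (y (b + 2 * c).toNat (b + 1) * y ((b + 2 * c).toNat + 1) (b - 1)) /
      (y (b + 2 * c).toNat b * y ((b + 2 * c).toNat + 1) b) else 0

noncomputable def betaT (k n : ℕ) (y : ℕ → ℕ → ℂ) (c : ℤ) (b : ℕ) : ℂ :=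
  if 1 ≤ b + 2 * c ∧ b + 2 * c ≤ n - k - 1 ∧ 1 ≤ b ∧ b ≤ k then
    (y ((b + 2 * c).toNat - 1) b * y ((b + 2 * c).toNat + 1) (b - 1)) /
      (y (b + 2 * c).toNat (b - 1) * y (b + 2 * c).toNat b) else 0

theorem sumA_eq (k n : ℕ) (y : ℕ → ℕ → ℂ) (c : ℤ) (hkn : k + 2 ≤ n) :
    sumA k n y (2 * c) = ∑ b ∈ Finset.range (k + 1), alphaT k n y c b := by
  unfold sumA alphaT
  rw [← Finset.sum_filter]
  refine Finset.sum_nbij' (fun p => p.2) (fun b : ℕ => (((b : ℤ) + 2 * c).toNat, b)) ?_ ?_ ?_ ?_ ?_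
  · rintro ⟨a, b⟩; simp only [Finset.mem_filter, Finset.mem_product, Finset.mem_range, Finset.mem_Icc]; omega
  · intro b; simp only [Finset.mem_filter, Finset.mem_product, Finset.mem_range, Finset.mem_Icc]; omega
  · rintro ⟨a, b⟩; simp only [Finset.mem_filter, Finset.mem_product, Finset.mem_range, Finset.mem_Icc, Prod.mk.injEq, and_true]; omega
  · intro b _; rfl
  · rintro ⟨a, b⟩; simp only [Finset.mem_filter, Finset.mem_product, Finset.mem_range, Finset.mem_Icc]
    intro h
    have : ((b : ℤ) + 2 * c).toNat = a := by omega
    rw [this]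

theorem sumB_eq (k n : ℕ) (y : ℕ → ℕ → ℂ) (c : ℤ) (hkn : k + 2 ≤ n) :
    sumB k n y (2 * c) = ∑ b ∈ Finset.range (k + 1), betaT k n y c b := by
  unfold sumB betaT
  rw [← Finset.sum_filter]
  refine Finset.sum_nbij' (fun p => p.2) (fun b : ℕ => (((b : ℤ) + 2 * c).toNat, b)) ?_ ?_ ?_ ?_ ?_
  · rintro ⟨a, b⟩; simp only [Finset.mem_filter, Finset.mem_product, Finset.mem_range, Finset.mem_Icc]; omega
  · intro b; simp only [Finset.mem_filter, Finset.mem_product, Finset.mem_range, Finset.mem_Icc]; omega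
  · rintro ⟨a, b⟩; simp only [Finset.mem_filter, Finset.mem_product, Finset.mem_Icc, Prod.mk.injEq, and_true]; omega
  · intro b _; rfl
  · rintro ⟨a, b⟩; simp only [Finset.mem_filter, Finset.mem_product, Finset.mem_Icc]
    intro h
    have : ((b : ℤ) + 2 * c).toNat = a := by omega
    rw [this]

/-- the downward-diagonal superpotential term formula for the
checkboard graph, for `−⌈(k−2)/2⌉ ≤ c ≤ ⌊(n−k−2)/2⌋`. -/
theorem superpotential_term_downward
    (n k : ℕ) (hn : 4 ≤ n) (hk : 2 ≤ k) (hkn : k ≤ n - 2)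
    (A : Matrix (Fin (n - k)) (ZMod n) ℂ)
    (hy : ∀ i ≤ n - k, ∀ j ≤ k, ych k n A i j ≠ 0)
    (c : ℤ) (hc1 : -(((k - 2 + 1) / 2 : ℕ) : ℤ) ≤ c) (hc2 : c ≤ (((n - k - 2) / 2 : ℕ) : ℤ)) :
    plucker n (n - k) A (Jplus n k ((((k : ℤ) + c : ℤ)) : ZMod n)) /
        plucker n (n - k) A (Jcyc n k ((((k : ℤ) + c : ℤ)) : ZMod n)) =
      sumA k n (ych k n A) (2 * c) + sumB k n (ych k n A) (2 * c) := by
  have hkn' : k + 2 ≤ n := by omega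
  have hc1' : -(k : ℤ) + 1 ≤ 2 * c := by omega
  have hc2' : 2 * c + 2 ≤ (n : ℤ) - k := by omega
  clear hc1 hc2
  rw [sumA_eq k n _ c hkn', sumB_eq k n _ c hkn', ← Finset.sum_add_distrib,
    Jcyc_eq n k A c (by omega), Jplus_eq n k A c (by omega)]
  set α := alphaT k n (ych k n A) c with hα
  set β := betaT k n (ych k n A) c with hβ
  set P := PZ n (n - k) A with hP
  have hBstep : ∀ b : ℕ, 1 ≤ b → b ≤ k → 1 ≤ (b : ℤ) + 2 * c → (b : ℤ) + 2 * c ≤ n - k - 1 →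
      (2 ≤ b → ∑ i ∈ Finset.range b, (α i + β i) =
        P (insert (c + 1) (Finset.Icc (1 - (b + c)) (c - 1) ∪ Finset.Icc (b + c) (n - k - c - 1))) /
        P (Finset.Icc (1 - (b + c)) c ∪ Finset.Icc (b + c) (n - k - c - 1))) →
      ∑ i ∈ Finset.range b, (α i + β i) + β b =
        P (insert (c + 1) (Finset.Icc (1 - (b + c)) (c - 1) ∪ Finset.Icc (b + c + 1) (n - k - c))) /
        P (Finset.Icc (1 - (b + c)) c ∪ Finset.Icc (b + c + 1) (n - k - c)) := by
    intro b hb1 hbk ha1 ha2 ih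
    have hβb : β b = _ := if_pos ⟨ha1, ha2, hb1, hbk⟩
    obtain ⟨a, ha⟩ := Int.eq_ofNat_of_zero_le (show 0 ≤ (b : ℤ) + 2 * c by omega)
    rw [ha, Int.toNat_natCast] at hβb
    have n1 := hy a (by omega) (b - 1) (by omega)
    have n2 := hy a (by omega) b (by omega)
    have y1 := ych_eq k n A a (b - 1) (by omega) (by omega) (by omega) (1 - (b + c)) c (b + c) (n - k - c - 1)
      (by omega) (by omega) (by omega) (by omega)
    have y2 := ych_eq k n A a b (by omega) (by omega) (by omega) (1 - (b + c)) c (b + c + 1) (n - k - c)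
      (by omega) (by omega) (by omega) (by omega)
    have y3 := ych_eq k n A (a - 1) b (by omega) (by omega) (by omega) (1 - (b + c)) (c - 1) (b + c) (n - k - c)
      (by omega) (by omega) (by omega) (by omega)
    have y4 := ych_eq k n A (a + 1) (b - 1) (by omega) (by omega) (by omega) (1 - (b + c)) (c + 1) (b + c + 1) (n - k - c - 1)
      (by omega) (by omega) (by omega) (by omega)
    rw [y1, ← hP] at n1
    rw [y2, ← hP] at n2
    rw [hβb, y1, y2, y3, y4, ← hP]
    by_cases hb2 : 2 ≤ b
    · have st := stepB n k A c (b + c) hkn' (by omega) (by omega) (by omega) (by omega) (by omega)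
      rw [← hP] at st
      rw [ih hb2]
      field_simp
      linear_combination -st
    · have hb : b = 1 := by omega
      subst hb
      have hG : ∑ i ∈ Finset.range 1, (α i + β i) = 0 := by
        rw [Finset.sum_range_one]
        have h1 : α 0 = 0 := if_neg (by omega)
        have h2 : β 0 = 0 := if_neg (by omega)
        rw [h1, h2, add_zero]
      rw [hG, zero_add]
      have e1 : (Finset.Icc (1 - (((1 : ℕ) : ℤ) + c)) (c + 1) ∪ Finset.Icc (((1 : ℕ) : ℤ) + c + 1) (n - k - c - 1)) =
        (Finset.Icc (1 - (((1 : ℕ) : ℤ) + c)) c ∪ Finset.Icc (((1 : ℕ) : ℤ) + c) (n - k - c - 1)) := by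
        ext x; simp only [Finset.mem_union, Finset.mem_Icc]; omega
      have e2 : insert (c + 1) (Finset.Icc (1 - (((1 : ℕ) : ℤ) + c)) (c - 1) ∪ Finset.Icc (((1 : ℕ) : ℤ) + c + 1) (n - k - c)) =
        (Finset.Icc (1 - (((1 : ℕ) : ℤ) + c)) (c - 1) ∪ Finset.Icc (((1 : ℕ) : ℤ) + c) (n - k - c)) := by
        ext x; simp only [Finset.mem_insert, Finset.mem_union, Finset.mem_Icc]; omega
      rw [e1, e2]
      field_simp
  have hAstep : ∀ b : ℕ, 1 ≤ b → b + 1 ≤ k → 0 ≤ (b : ℤ) + 2 * c → (b : ℤ) + 2 * c ≤ n - k - 1 →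
      ∑ i ∈ Finset.range (b + 1), (α i + β i) =
        P (insert (c + 1) (Finset.Icc (-(b + c)) (c - 1) ∪ Finset.Icc (b + c + 1) (n - k - c - 1))) /
        P (Finset.Icc (-(b + c)) c ∪ Finset.Icc (b + c + 1) (n - k - c - 1)) := by
    intro b
    induction b with
    | zero => intro h; omega
    | succ b0 ih =>
      have hB := hBstep (b0 + 1)
      set b := b0 + 1 with hb
      intro hb1 hbk ha1 ha2
      have hαb : α b = _ := if_pos ⟨ha1, ha2, hb1, hbk⟩
      obtain ⟨a, ha⟩ := Int.eq_ofNat_of_zero_le ha1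
      rw [ha, Int.toNat_natCast] at hαb
      have n1 := hy a (by omega) b (by omega)
      have n2 := hy (a + 1) (by omega) b (by omega)
      have y1 := ych_eq k n A a b (by omega) (by omega) (by omega) (1 - (b + c)) c (b + c + 1) (n - k - c)
        (by omega) (by omega) (by omega) (by omega)
      have y2 := ych_eq k n A (a + 1) b (by omega) (by omega) (by omega) (-(b + c)) c (b + c + 1) (n - k - c - 1)
        (by omega) (by omega) (by omega) (by omega)
      have y3 := ych_eq k n A a (b + 1) (by omega) (by omega) (by omega) (-(b + c)) (c - 1) (b + c + 1) (n - k - c)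
        (by omega) (by omega) (by omega) (by omega)
      have y4 := ych_eq k n A (a + 1) (b - 1) (by omega) (by omega) (by omega) (1 - (b + c)) (c + 1) (b + c + 1) (n - k - c - 1)
        (by omega) (by omega) (by omega) (by omega)
      rw [y1, ← hP] at n1
      rw [y2, ← hP] at n2
      rw [Finset.sum_range_succ, add_comm (α b), ← add_assoc]
      by_cases hpos : 1 ≤ (b : ℤ) + 2 * c
      · rw [hB hb1 (by omega) hpos ha2 (fun h2 => by
          rw [ih (by omega) (by omega) (by omega) (by omega)]
          have e1 : -((b0 : ℤ) + c) = 1 - ((b : ℤ) + c) := by omega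
          have e2 : (b0 : ℤ) + c + 1 = (b : ℤ) + c := by omega
          rw [e1, e2])]
        rw [hαb, y1, y2, y3, y4, ← hP]
        have st := stepA n k A c (b + c) hkn' (by omega) (by omega) (by omega) (by omega) (by omega)
        rw [← hP] at st
        field_simp
        linear_combination -st
      · have hG : ∑ i ∈ Finset.range b, (α i + β i) = 0 := by
          refine Finset.sum_eq_zero fun i hi => ?_
          rw [Finset.mem_range] at hi
          have h1 : α i = 0 := if_neg (by omega)
          have h2 : β i = 0 := if_neg (by omega)
          rw [h1, h2, add_zero]
        have h2 : β b = 0 := if_neg (by omega)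
        rw [hG, h2, hαb, y1, y2, y3, y4, ← hP]
        have e1 : (Finset.Icc (-((b : ℤ) + c)) (c - 1) ∪ Finset.Icc ((b : ℤ) + c + 1) (n - k - c)) =
          (Finset.Icc (1 - ((b : ℤ) + c)) c ∪ Finset.Icc ((b : ℤ) + c + 1) (n - k - c)) := by
          ext x; simp only [Finset.mem_union, Finset.mem_Icc]; omega
        have e2 : (Finset.Icc (1 - ((b : ℤ) + c)) (c + 1) ∪ Finset.Icc ((b : ℤ) + c + 1) (n - k - c - 1)) =
          insert (c + 1) (Finset.Icc (-((b : ℤ) + c)) (c - 1) ∪ Finset.Icc ((b : ℤ) + c + 1) (n - k - c - 1)) := by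
          ext x; simp only [Finset.mem_insert, Finset.mem_union, Finset.mem_Icc]; omega
        rw [e1, e2]
        field_simp
        ring
  by_cases hend : (k : ℤ) + 2 * c ≤ n - k - 1
  · have hαk : α k = 0 := if_neg (by omega)
    rw [Finset.sum_range_succ, hαk, zero_add, hBstep k (by omega) le_rfl (by omega) hend (fun h2 => by
      have := hAstep (k - 1) (by omega) (by omega) (by omega) (by omega)
      have e0 : k - 1 + 1 = k := by omega
      have e1 : -(((k - 1 : ℕ) : ℤ) + c) = 1 - ((k : ℤ) + c) := by omega
      have e2 : ((k - 1 : ℕ) : ℤ) + c + 1 = (k : ℤ) + c := by omega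
      rw [e0, e1, e2] at this
      exact this)]
    congr 1
    · apply PZ_congr <;> (intro x; simp only [Finset.mem_insert, Finset.mem_union, Finset.mem_Icc]; omega)
    · apply PZ_congr <;> (intro x; simp only [Finset.mem_union, Finset.mem_Icc]; omega)
  · obtain ⟨b, hb⟩ := Int.eq_ofNat_of_zero_le (show 0 ≤ (n : ℤ) - k - 1 - 2 * c by omega)
    have hsum : ∑ i ∈ Finset.range (k + 1), (α i + β i) = ∑ i ∈ Finset.range (b + 1), (α i + β i) := by
      symm
      apply Finset.sum_subset
      · intro x; simp only [Finset.mem_range]; omega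
      · intro i _ hi
        rw [Finset.mem_range] at hi
        have h1 : α i = 0 := if_neg (by omega)
        have h2 : β i = 0 := if_neg (by omega)
        rw [h1, h2, add_zero]
    rw [hsum, hAstep b (by omega) (by omega) (by omega) (by omega)]
    congr 1
    · apply PZ_congr <;> (intro x; simp only [Finset.mem_insert, Finset.mem_union, Finset.mem_Icc]; omega)
    · apply PZ_congr <;> (intro x; simp only [Finset.mem_union, Finset.mem_Icc]; omega)
end

section
/- Let n ≥ 4 and 2 ≤ k ≤ n−2 be integers, let A be an (n−k)×n matrix over ℂ with y_{i,j}(A) ≠ 0 for all 0 ≤ i ≤ n−k and 0 ≤ j ≤ k, and let c be an integer with −⌊(k−2)/2⌋ ≤ c ≤ ⌈(n−k−2)/2⌉. Then p_{J⁺_{n−c}}(A) / p_{J_{n−c}}(A) = Σ_{(a,b) : a−b = 2c−1, 0 ≤ a ≤ n−k−1, 1 ≤ b ≤ k−1} ( y_{a,b+1} y_{a+1,b−1} )/( y_{a,b} y_{a+1,b} ) + Σ_{(a,b) : a−b = 2c−1, 1 ≤ a ≤ n−k−1, 1 ≤ b ≤ k} ( y_{a−1,b} y_{a+1,b−1} )/(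 y_{a,b−1} y_{a,b} ), where all y's are evaluated at A. -/
open Finset

/-! ### Linear algebra -/

theorem three_term_matrix {m : Type*} [DecidableEq m] [Fintype m] (M : Matrix m m ℂ) (i j : m)
    (hij : i ≠ j) (x w : m → ℂ) :
    M.det * ((M.updateCol i x).updateCol j w).det =
      (M.updateCol i w).det * ((M.updateCol i x).updateCol j (fun t => M t i)).det +
      (M.updateCol j w).det * (M.updateCol i x).det := by
  have h1 : ((M.updateCol i x).cramer (M.det • w)) j
      = M.det * ((M.updateCol i x).updateCol j w).det := by
    rw [map_smul, Pi.smul_apply, Matrix.cramer_apply, smul_eq_mul]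
  rw [← h1, ← Matrix.mulVec_cramer]
  have h2 : M.mulVec (M.cramer w) = ∑ t, (M.cramer w t) • (fun s => M s t) := by
    ext s
    simp [Matrix.mulVec, dotProduct, mul_comm]
  rw [h2, map_sum, Finset.sum_apply]
  have h3 : ∀ t, ((M.updateCol i x).cramer ((M.cramer w t) • (fun s => M s t))) j
      = (M.updateCol t w).det * ((M.updateCol i x).updateCol j (fun s => M s t)).det := by
    intro t
    rw [map_smul, Pi.smul_apply, Matrix.cramer_apply, Matrix.cramer_apply, smul_eq_mul]
  simp_rw [h3]
  rw [← Finset.sum_subset (Finset.subset_univ {i, j})]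
  · rw [Finset.sum_pair hij]
    congr 3
    ext s t
    by_cases h : t = j
    · subst h; simp [Matrix.updateCol_apply, hij.symm]
    · simp [Matrix.updateCol_apply, h]
  · intro t _ ht
    simp only [Finset.mem_insert, Finset.mem_singleton, not_or] at ht
    have hz : ((M.updateCol i x).updateCol j (fun s => M s t)).det = 0 := by
      apply Matrix.det_zero_of_column_eq (i := t) (j := j) ht.2
      intro s
      simp [Matrix.updateCol_apply, ht.1, ht.2]
    rw [hz, mul_zero]

/-- determinant of a list of columns -/
noncomputable def DL {r : ℕ} (v : ℤ → Fin r → ℂ) (l : List ℤ) : ℂ :=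
  (Matrix.of fun (s : Fin r) (i : Fin r) => v (l.getD i 0) s).det

theorem DL_swap {r : ℕ} (v : ℤ → Fin r → ℂ) (P l : List ℤ) (a b : ℤ) (h : P.length + 2 ≤ r) :
    DL v (P ++ a :: b :: l) = - DL v (P ++ b :: a :: l) := by
  let i : Fin r := ⟨P.length, by omega⟩
  let j : Fin r := ⟨P.length + 1, by omega⟩
  have hij : i ≠ j := by simp [i, j]
  have := Matrix.det_permute' (Equiv.swap i j)
    (Matrix.of fun (s : Fin r) (i : Fin r) => v ((P ++ b :: a :: l).getD i 0) s)
  rw [Equiv.Perm.sign_swap hij] at this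
  unfold DL
  simp only [Units.val_neg, Units.val_one, Int.cast_neg, Int.cast_one, neg_mul, one_mul] at this
  rw [← this]
  congr 1
  ext s t
  simp only [Matrix.of_apply, Matrix.submatrix_apply, id]
  congr 1
  by_cases h1 : t = i
  · rw [h1, Equiv.swap_apply_left]
    simp [i, j, List.getElem?_append]
  by_cases h2 : t = j
  · rw [h2, Equiv.swap_apply_right]
    simp [i, j, List.getElem?_append]
  rw [Equiv.swap_apply_of_ne_of_ne h1 h2]
  have h1' : (t : ℕ) ≠ P.length := fun h => h1 (Fin.ext h)
  have h2' : (t : ℕ) ≠ P.length + 1 := fun h => h2 (Fin.ext h)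
  simp only [List.getD_eq_getElem?_getD, List.getElem?_append]
  split_ifs with h3
  · rfl
  · obtain ⟨q, hq⟩ : ∃ q, (t : ℕ) - P.length = q + 2 := ⟨t - P.length - 2, by omega⟩
    simp [hq]

theorem DL_insert {r : ℕ} (v : ℤ → Fin r → ℂ) (x : ℤ) (l : List ℤ) :
    ∀ (P : List ℤ), l.Pairwise (· ≤ ·) → P.length + l.length + 1 ≤ r →
    DL v (P ++ l.orderedInsert (· ≤ ·) x) =
      (-1) ^ (l.countP (fun t => decide (t < x))) * DL v (P ++ x :: l) := by
  induction l with
  | nil => intro P _ _; simp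
  | cons b l ih =>
    intro P hs hl
    rw [List.pairwise_cons] at hs
    simp only [List.length_cons] at hl
    rw [List.orderedInsert_cons]
    split_ifs with hxb
    · have : (b :: l).countP (fun t => decide (t < x)) = 0 := by
        rw [List.countP_eq_zero]
        intro t ht
        rcases List.mem_cons.1 ht with rfl | ht
        · simpa using hxb
        · have := hs.1 t ht
          simp; omega
      rw [this]; simp
    · have h := ih (P ++ [b]) hs.2 (by simp; omega)
      simp only [List.append_assoc, List.singleton_append] at h
      rw [h, DL_swap v P l b x (by omega), List.countP_cons]
      have : b < x := by omega
      simp [this, pow_succ]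

/-- determinant of a set of columns -/
noncomputable def DS {r : ℕ} (v : ℤ → Fin r → ℂ) (J : Finset ℤ) : ℂ :=
  DL v (J.sort (· ≤ ·))

/-- sign -/
noncomputable def sg (I : Finset ℤ) (x : ℤ) : ℂ := (-1) ^ (I.filter (· < x)).card

theorem sg_sq (I : Finset ℤ) (x : ℤ) : sg I x * sg I x = 1 := by
  unfold sg
  rw [← mul_pow]; simp

theorem sort_insert_eq (I : Finset ℤ) (x : ℤ) (hx : x ∉ I) :
    (insert x I).sort (· ≤ ·) = (I.sort (· ≤ ·)).orderedInsert (· ≤ ·) x := by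
  apply List.Perm.eq_of_pairwise (le := (· ≤ ·))
  · intro a b _ _ h1 h2; omega
  · exact Finset.pairwise_sort _ _
  · exact List.Pairwise.orderedInsert _ _ (Finset.pairwise_sort _ _)
  · refine (Finset.sort_perm_toList _ _).trans ?_
    refine (Finset.toList_insert hx).trans ?_
    refine List.Perm.trans ?_ (List.perm_orderedInsert _ _ _).symm
    exact List.Perm.cons _ (Finset.sort_perm_toList _ _).symm

theorem DL_sort_insert {r : ℕ} (v : ℤ → Fin r → ℂ) (I : Finset ℤ) (x : ℤ) (hx : x ∉ I)
    (P : List ℤ) (h : P.length + I.card + 1 ≤ r) :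
    DL v (P ++ (insert x I).sort (· ≤ ·)) = sg I x * DL v (P ++ x :: I.sort (· ≤ ·)) := by
  rw [sort_insert_eq I x hx, DL_insert v x _ P (Finset.pairwise_sort _ _) (by simpa using h)]
  congr 1
  unfold sg
  congr 1
  rw [Finset.card_def, Finset.filter_val, ← Multiset.countP_eq_card_filter,
    ← Finset.sort_eq I (· ≤ ·), Multiset.coe_countP]

theorem DS_insert {r : ℕ} (v : ℤ → Fin r → ℂ) (I : Finset ℤ) (x : ℤ) (hx : x ∉ I)
    (h : I.card + 1 ≤ r) :
    DS v (insert x I) = sg I x * DL v (x :: I.sort (· ≤ ·)) := by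
  have := DL_sort_insert v I x hx [] (by simpa using h)
  simpa [DS] using this

theorem DS_insert2 {r : ℕ} (v : ℤ → Fin r → ℂ) (I : Finset ℤ) (x y : ℤ) (hx : x ∉ I) (hy : y ∉ I)
    (hxy : x < y) (h : I.card + 2 ≤ r) :
    DS v (insert x (insert y I)) = sg I x * sg I y * DL v (x :: y :: I.sort (· ≤ ·)) := by
  have hc : (insert y I).card = I.card + 1 := Finset.card_insert_of_notMem hy
  rw [DS_insert v _ x (by simp [hx, hxy.ne]) (by omega)]
  have h1 := DL_sort_insert v I y hy [x] (by simp; omega)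
  simp only [List.singleton_append] at h1
  have h2 : sg (insert y I) x = sg I x := by
    unfold sg
    rw [Finset.filter_insert, if_neg (by omega)]
  rw [h1, h2, mul_assoc]

theorem DL_three {r : ℕ} (v : ℤ → Fin r → ℂ) (l : List ℤ) (x y z w : ℤ) (hr : 2 ≤ r) :
    DL v (y :: z :: l) * DL v (x :: w :: l) =
      DL v (w :: z :: l) * DL v (x :: y :: l) + DL v (y :: w :: l) * DL v (x :: z :: l) := by
  let i : Fin r := ⟨0, by omega⟩
  let j : Fin r := ⟨1, by omega⟩
  have hij : i ≠ j := by simp [i, j]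
  have key := three_term_matrix
    (Matrix.of fun (s : Fin r) (i : Fin r) => v ((y :: z :: l).getD i 0) s) i j hij (v x) (v w)
  have e : ∀ a b : ℤ, ∀ M : Matrix (Fin r) (Fin r) ℂ, (∀ s, M s i = v a s) → (∀ s, M s j = v b s) →
      (∀ s t, t ≠ i → t ≠ j → M s t = v ((y :: z :: l).getD t 0) s) →
      M.det = DL v (a :: b :: l) := by
    intro a b M h1 h2 h3
    unfold DL
    congr 1
    ext s t
    by_cases ht : t = i
    · rw [ht, h1]; simp [i]
    by_cases ht' : t = j
    · rw [ht', h2]; simp [j]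
    rw [h3 s t ht ht']
    have h1' : (t : ℕ) ≠ 0 := fun h => ht (Fin.ext h)
    have h2' : (t : ℕ) ≠ 1 := fun h => ht' (Fin.ext h)
    obtain ⟨q, hq⟩ : ∃ q, (t : ℕ) = q + 2 := ⟨t - 2, by omega⟩
    simp [hq]
  rw [e y z, e x w, e w z, e x y, e y w, e x z] at key
  · exact key
  all_goals intros; simp [Matrix.updateCol_apply, hij, hij.symm, *]
  all_goals simp [i, j]

theorem DL_same {r : ℕ} (v : ℤ → Fin r → ℂ) (l : List ℤ) (x y : ℤ) (c : ℂ) (hr : 2 ≤ r)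
    (h : ∀ s, v y s = c * v x s) : DL v (x :: y :: l) = 0 := by
  let i : Fin r := ⟨0, by omega⟩
  let j : Fin r := ⟨1, by omega⟩
  have hij : i ≠ j := by simp [i, j]
  unfold DL
  have hM : (Matrix.of fun (s : Fin r) (i : Fin r) => v ((x :: y :: l).getD i 0) s) =
      (Matrix.of fun (s : Fin r) (i : Fin r) => v ((x :: y :: l).getD i 0) s).updateCol j
        (c • v x) := by
    ext s t
    by_cases ht' : t = j
    · subst ht'; simp [j, h]
    · simp [Matrix.updateCol_apply, ht']
  rw [hM, Matrix.det_updateCol_smul, Matrix.det_zero_of_column_eq hij, mul_zero]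
  intro s
  simp [Matrix.updateCol_apply, hij]
  simp [i]

theorem DS_three {r : ℕ} (v : ℤ → Fin r → ℂ) (I : Finset ℤ) (x y z w : ℤ) (hx : x ∉ I)
    (hy : y ∉ I) (hz : z ∉ I) (hw : w ∉ I) (hxy : x < y) (hyz : y < z) (hzw : z < w)
    (h : I.card + 2 ≤ r) :
    DS v (insert x (insert z I)) * DS v (insert y (insert w I)) =
      DS v (insert x (insert y I)) * DS v (insert z (insert w I)) +
      DS v (insert x (insert w I)) * DS v (insert y (insert z I)) := by
  rw [DS_insert2 v I x z, DS_insert2 v I y w, DS_insert2 v I x y, DS_insert2 v I z w,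
    DS_insert2 v I x w, DS_insert2 v I y z] <;> try first | assumption | omega
  have key := DL_three v (I.sort (· ≤ ·)) x y z w (by omega)
  have hs := DL_swap v [] (I.sort (· ≤ ·)) w z (by simp; omega)
  simp only [List.nil_append] at hs
  rw [hs] at key
  linear_combination (-sg I x * sg I y * sg I z * sg I w) * key

/-! ### Plücker coordinates through integer lifts -/

theorem DL_smul {r : ℕ} (v : ℤ → Fin r → ℂ) (l : List ℤ) (x y : ℤ) (c : ℂ) (hr : 1 ≤ r)
    (h : ∀ s, v y s = c * v x s) : DL v (y :: l) = c * DL v (x :: l) := by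
  let i : Fin r := ⟨0, by omega⟩
  unfold DL
  rw [← smul_eq_mul]
  have hM : (Matrix.of fun (s : Fin r) (i : Fin r) => v ((y :: l).getD i 0) s) =
      (Matrix.of fun (s : Fin r) (i : Fin r) => v ((x :: l).getD i 0) s).updateCol i
        (c • v x) := by
    ext s t
    by_cases ht : t = i
    · subst ht; simp [i, h]
    · have h1' : (t : ℕ) ≠ 0 := fun h => ht (Fin.ext h)
      obtain ⟨q, hq⟩ : ∃ q, (t : ℕ) = q + 1 := ⟨t - 1, by omega⟩
      simp [ht, hq]
  have hM' : (Matrix.of fun (s : Fin r) (i : Fin r) => v ((x :: l).getD i 0) s) =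
      (Matrix.of fun (s : Fin r) (i : Fin r) => v ((x :: l).getD i 0) s).updateCol i
        (v x) := by
    ext s t
    by_cases ht : t = i
    · subst ht; simp [i]
    · simp [ht]
  rw [hM, Matrix.det_updateCol_smul, ← hM', smul_eq_mul]

/-- twisted periodic columns -/
noncomputable def vv (n r : ℕ) (A : Matrix (Fin r) (ZMod n) ℂ) (t : ℤ) (s : Fin r) : ℂ :=
  ((-1 : ℂ) ^ (r - 1)) ^ ((t - 1) / (n : ℤ)) * A s (t : ZMod n)

theorem vv_add (n r : ℕ) (hn : 0 < n) (A : Matrix (Fin r) (ZMod n) ℂ) (t : ℤ) (s : Fin r) :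
    vv n r A (t + n) s = (-1 : ℂ) ^ (r - 1) * vv n r A t s := by
  unfold vv
  have h1 : (t + n - 1) / (n : ℤ) = (t - 1) / (n : ℤ) + 1 := by
    rw [show t + (n : ℤ) - 1 = (t - 1) + n by ring, Int.add_ediv_of_dvd_right (dvd_refl _),
      Int.ediv_self (by omega)]
  have h0 : ((-1 : ℂ) ^ (r - 1)) ≠ 0 := pow_ne_zero _ (by norm_num)
  rw [h1, zpow_add₀ h0]
  simp
  ring

theorem DS_move (n r : ℕ) (hn : 0 < n) (A : Matrix (Fin r) (ZMod n) ℂ) (K : Finset ℤ) (x : ℤ)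
    (hK : ∀ t ∈ K, x < t ∧ t < x + n) (hc : K.card + 1 = r) :
    DS (vv n r A) (insert (x + n) K) = DS (vv n r A) (insert x K) := by
  have hx : x ∉ K := fun h => by have := hK x h; omega
  have hx' : x + n ∉ K := fun h => by have := hK _ h; omega
  rw [DS_insert _ _ _ hx (by omega), DS_insert _ _ _ hx' (by omega),
    DL_smul (vv n r A) _ x (x + n) _ (by omega) (vv_add n r hn A x)]
  have h1 : sg K x = 1 := by
    unfold sg
    rw [Finset.filter_false_of_mem]
    · simp
    · intro t ht; have := hK t ht; omega
  have h2 : sg K (x + n) = (-1) ^ (r - 1) := by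
    unfold sg
    rw [Finset.filter_true_of_mem]
    · congr 1; omega
    · intro t ht; have := hK t ht; omega
  rw [h1, h2, ← mul_assoc, ← mul_pow]
  simp

theorem plucker_base (n r : ℕ) (hn : 0 < n) (A : Matrix (Fin r) (ZMod n) ℂ) (J : Finset ℤ)
    (hJ : ∀ t ∈ J, 1 ≤ t ∧ t ≤ n) (hc : J.card = r) :
    plucker n r A (J.image (fun t : ℤ => (t : ZMod n))) = DS (vv n r A) J := by
  haveI : NeZero n := ⟨by omega⟩
  have hval : ∀ t : ℤ, 1 ≤ t → t ≤ n → (((t : ZMod n) - 1).val : ℤ) = t - 1 := by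
    intro t h1 h2
    have : ((t : ZMod n) - 1) = (((t - 1 : ℤ)) : ZMod n) := by push_cast; ring
    rw [this, ZMod.val_intCast, Int.emod_eq_of_lt (by omega) (by omega)]
  have himg : (J.image (fun t : ℤ => (t : ZMod n))).image (fun x => (x - 1).val)
      = J.image (fun t : ℤ => (t - 1).toNat) := by
    rw [Finset.image_image]
    apply Finset.image_congr
    intro t ht
    have := hJ t ht
    have := hval t this.1 this.2
    simp only [Function.comp]
    omega
  have hcard : (J.image (fun t : ℤ => (t - 1).toNat)).card = r := by
    rw [Finset.card_image_of_injOn, hc]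
    intro a ha b hb hab
    have := hJ a ha
    have := hJ b hb
    simp only at hab
    omega
  unfold plucker
  rw [dif_pos (by rw [himg]; exact hcard)]
  unfold DS DL
  congr 1
  ext s i
  simp only [Matrix.submatrix_apply, id, Matrix.of_apply, Finset.coe_orderIsoOfFin_apply]
  have hf := Finset.orderEmbOfFin_unique
    (s := (J.image (fun t : ℤ => (t : ZMod n))).image (fun x => (x - 1).val))
    (by rw [himg]; exact hcard) (f := fun i : Fin r => (J.orderEmbOfFin hc i - 1).toNat)
    (by
      intro x
      rw [himg]
      exact Finset.mem_image_of_mem (fun t : ℤ => (t - 1).toNat) (J.orderEmbOfFin_mem hc x))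
    (by
      intro a b hab
      have h1 : J.orderEmbOfFin hc a < J.orderEmbOfFin hc b := by simpa using hab
      have := hJ _ (J.orderEmbOfFin_mem hc a)
      have := hJ _ (J.orderEmbOfFin_mem hc b)
      simp only
      omega)
  rw [← hf]
  have hg : (J.sort (· ≤ ·)).getD i 0 = J.orderEmbOfFin hc i := by
    rw [Finset.orderEmbOfFin_apply, List.getD_eq_getElem _ _ (by simp [hc])]
    rfl
  rw [hg]
  have hm := hJ _ (J.orderEmbOfFin_mem hc i)
  unfold vv
  rw [Int.ediv_eq_zero_of_lt (by omega) (by omega), zpow_zero, one_mul]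
  congr 1
  have h5 : (((J.orderEmbOfFin hc i - 1).toNat : ℕ) : ZMod n)
      = ((((J.orderEmbOfFin hc i - 1).toNat : ℕ) : ℤ) : ZMod n) := by simp
  rw [h5, Int.toNat_of_nonneg (by omega)]
  push_cast
  ring

theorem plucker_lift (n r : ℕ) (hn : 0 < n) (A : Matrix (Fin r) (ZMod n) ℂ) (m : ℤ) :
    ∀ J : Finset ℤ, (∀ t ∈ J, m + 1 ≤ t ∧ t ≤ m + n) → J.card = r →
    plucker n r A (J.image (fun t : ℤ => (t : ZMod n))) = DS (vv n r A) J := by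
  induction m using Int.induction_on with
  | zero =>
    intro J hJ hc
    exact plucker_base n r hn A J (fun t ht => by have := hJ t ht; omega) hc
  | succ m ih =>
    intro J hJ hc
    by_cases hx : (m + 1 + n : ℤ) ∈ J
    · have hK : ∀ t ∈ J.erase (m + 1 + n : ℤ), (m + 1 : ℤ) < t ∧ t < m + 1 + n := by
        intro t ht
        rw [Finset.mem_erase] at ht
        have := hJ t ht.2
        omega
      have hcK := Finset.card_erase_add_one hx
      have h1 := DS_move n r hn A _ _ hK (by omega)
      rw [Finset.insert_erase hx] at h1
      rw [h1, ← ih]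
      · conv_lhs => rw [← Finset.insert_erase hx]
        rw [Finset.image_insert, Finset.image_insert]
        simp
      · intro t ht
        rcases Finset.mem_insert.1 ht with rfl | ht
        · omega
        · have := hK t ht; omega
      · rw [Finset.card_insert_of_notMem (fun h => by have := hK _ h; omega)]; omega
    · apply ih J _ hc
      intro t ht
      have := hJ t ht
      have : t ≠ m + 1 + n := fun h => hx (h ▸ ht)
      omega
  | pred m ih =>
    intro J hJ hc
    by_cases hx : (-m : ℤ) ∈ J
    · have hK : ∀ t ∈ J.erase (-m : ℤ), (-m : ℤ) < t ∧ t < -m + n := by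
        intro t ht
        rw [Finset.mem_erase] at ht
        have := hJ t ht.2
        omega
      have hcK := Finset.card_erase_add_one hx
      have h1 := DS_move n r hn A _ _ hK (by omega)
      rw [Finset.insert_erase hx] at h1
      rw [← h1, ← ih]
      · conv_lhs => rw [← Finset.insert_erase hx]
        rw [Finset.image_insert, Finset.image_insert]
        simp
      · intro t ht
        rcases Finset.mem_insert.1 ht with rfl | ht
        · omega
        · have := hK t ht; omega
      · rw [Finset.card_insert_of_notMem (fun h => by have := hK _ h; omega)]; omega
    · apply ih J _ hc
      intro t ht
      have := hJ t ht
      have : t ≠ -m := fun h => hx (h ▸ ht)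
      omega

/-- two intervals -/
noncomputable def UU (a b c d : ℤ) : Finset ℤ := Finset.Icc a b ∪ Finset.Icc c d

theorem mem_UU (a b c d t : ℤ) : t ∈ UU a b c d ↔ (a ≤ t ∧ t ≤ b) ∨ (c ≤ t ∧ t ≤ d) := by
  simp [UU]

theorem card_UU (a b c d : ℤ) (h1 : a ≤ b + 1) (h2 : b < c) (h3 : c ≤ d + 1) :
    ((UU a b c d).card : ℤ) = (b + 1 - a) + (d + 1 - c) := by
  unfold UU
  rw [Finset.card_union_of_disjoint]
  · simp; omega
  · rw [Finset.disjoint_left]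
    intro t h h'
    simp at h h'
    omega

theorem ych_eq_s16 (k n : ℕ) (hk : k ≤ n) (hn : 0 < n) (A : Matrix (Fin (n - k)) (ZMod n) ℂ) (i j : ℕ)
    (hi : i ≤ n - k) (hj : j ≤ k) (m : ℤ) (hm : m = (((i + j + 1) / 2 : ℕ) : ℤ)) :
    ych k n A i j = DS (vv n (n - k) A) (UU (1 - m) (i - m) (i + j + 1 - m) (n - k + j - m)) := by
  unfold ych Jch
  generalize (i + j + 1) / 2 = M at hm ⊢
  rw [← plucker_lift n (n - k) hn A (-m)]
  · congr 1
    have inj : ∀ a b : ℕ, 1 ≤ a → a ≤ n → 1 ≤ b → b ≤ n → (a : ZMod n) = b → a = b := by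
      intro a b h1 h2 h3 h4 h
      rw [ZMod.natCast_eq_natCast_iff] at h
      have h5 := h.dvd
      obtain ⟨q, hq⟩ := h5
      rcases lt_trichotomy q 0 with h | h | h
      · nlinarith
      · subst h; omega
      · nlinarith
    ext y
    simp only [seg, Finset.mem_image, Finset.mem_union, Finset.mem_sdiff, Finset.mem_Icc,
      mem_UU]
    constructor
    · rintro ⟨x, (⟨t, ht, rfl⟩ | ⟨⟨t, ht, rfl⟩, h2⟩), rfl⟩
      · exact ⟨t - m, Or.inl (by omega), by rw [hm]; push_cast; ring⟩
      · have : ¬ (t ≤ i + j) := fun h => h2 ⟨t, ⟨ht.1, h⟩, rfl⟩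
        exact ⟨t - m, Or.inr (by omega), by rw [hm]; push_cast; ring⟩
    · rintro ⟨t, ht, rfl⟩
      refine ⟨(((t + m).toNat : ℕ) : ZMod n), ?_, ?_⟩
      · rcases ht with ht | ht
        · exact Or.inl ⟨(t + m).toNat, by omega, rfl⟩
        · refine Or.inr ⟨⟨(t + m).toNat, by omega, rfl⟩, ?_⟩
          rintro ⟨q, hq, h⟩
          have := inj _ _ hq.1 (by omega) (by omega) (by omega) h
          omega
      · have h5 : (((t + m).toNat : ℕ) : ZMod n)
            = ((((t + m).toNat : ℕ) : ℤ) : ZMod n) := (Int.cast_natCast _).symm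
        rw [h5, Int.toNat_of_nonneg (by omega), hm]
        push_cast
        ring
  · intro t ht
    rw [mem_UU] at ht
    omega
  · have := card_UU (1 - m) (i - m) (i + j + 1 - m) (n - k + j - m) (by omega) (by omega) (by omega)
    omega

theorem ych_eq' (k n : ℕ) (hk : k ≤ n) (hn : 0 < n) (A : Matrix (Fin (n - k)) (ZMod n) ℂ)
    (i j : ℕ) (hi : i ≤ n - k) (hj : j ≤ k) (m p q u w : ℤ) (hm : m = (((i + j + 1) / 2 : ℕ) : ℤ))
    (hp : p = 1 - m) (hq : q = i - m) (hu : u = i + j + 1 - m) (hw : w = n - k + j - m) :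
    ych k n A i j = DS (vv n (n - k) A) (UU p q u w) := by
  rw [hp, hq, hu, hw]
  exact ych_eq_s16 k n hk hn A i j hi hj m hm

/-- numerator of `fS` -/
noncomputable def fS {r : ℕ} (v : ℤ → Fin r → ℂ) (c s : ℤ) : ℂ :=
  DS v (insert (r - c + 1) (UU (1 - s) (c - 1) s (r - c - 1))) / DS v (UU (1 - s) (c - 1) s (r - c))

/-- ratio at the even vertices -/
noncomputable def fT {r : ℕ} (v : ℤ → Fin r → ℂ) (c s : ℤ) : ℂ :=
  DS v (insert (r - c + 1) (UU (1 - s) c (s + 1) (r - c - 1))) / DS v (UU (1 - s) c (s + 1) (r - c))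

theorem stepA_s16 {r : ℕ} (v : ℤ → Fin r → ℂ) (c s : ℤ) (h1 : 1 - s ≤ c) (h2 : c < s) (h3 : s < r - c)
    (hS : DS v (UU (1 - s) (c - 1) s (r - c)) ≠ 0) (hT : DS v (UU (1 - s) c (s + 1) (r - c)) ≠ 0) :
    (DS v (UU (1 - s) (c - 1) (s + 1) (r - c + 1)) * DS v (UU (1 - s) c s (r - c - 1))) /
      (DS v (UU (1 - s) (c - 1) s (r - c)) * DS v (UU (1 - s) c (s + 1) (r - c))) =
      fS v c s - fT v c s := by
  have hcard := card_UU (1 - s) (c - 1) (s + 1) (r - c - 1) (by omega) (by omega) (by omega)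
  have key := DS_three v (UU (1 - s) (c - 1) (s + 1) (r - c - 1)) c s (r - c) (r - c + 1)
    (by rw [mem_UU]; omega) (by rw [mem_UU]; omega) (by rw [mem_UU]; omega)
    (by rw [mem_UU]; omega) (by omega) (by omega) (by omega) (by omega)
  unfold fS fT
  have e1 : insert c (insert (r - c : ℤ) (UU (1 - s) (c - 1) (s + 1) (r - c - 1)))
      = UU (1 - s) c (s + 1) (r - c) := by
    ext t; simp only [Finset.mem_insert, mem_UU]; omega
  have e2 : insert s (insert (r - c + 1 : ℤ) (UU (1 - s) (c - 1) (s + 1) (r - c - 1)))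
      = insert (r - c + 1 : ℤ) (UU (1 - s) (c - 1) s (r - c - 1)) := by
    ext t; simp only [Finset.mem_insert, mem_UU]; omega
  have e3 : insert c (insert s (UU (1 - s) (c - 1) (s + 1) (r - c - 1)))
      = UU (1 - s) c s (r - c - 1) := by
    ext t; simp only [Finset.mem_insert, mem_UU]; omega
  have e4 : insert (r - c : ℤ) (insert (r - c + 1 : ℤ) (UU (1 - s) (c - 1) (s + 1) (r - c - 1)))
      = UU (1 - s) (c - 1) (s + 1) (r - c + 1) := by
    ext t; simp only [Finset.mem_insert, mem_UU]; omega
  have e5 : insert c (insert (r - c + 1 : ℤ) (UU (1 - s) (c - 1) (s + 1) (r - c - 1)))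
      = insert (r - c + 1 : ℤ) (UU (1 - s) c (s + 1) (r - c - 1)) := by
    ext t; simp only [Finset.mem_insert, mem_UU]; omega
  have e6 : insert s (insert (r - c : ℤ) (UU (1 - s) (c - 1) (s + 1) (r - c - 1)))
      = UU (1 - s) (c - 1) s (r - c) := by
    ext t; simp only [Finset.mem_insert, mem_UU]; omega
  rw [e1, e2, e3, e4, e5, e6] at key
  rw [div_sub_div _ _ hS hT]
  congr 1
  linear_combination (-1 : ℂ) * key

theorem stepA_end {r : ℕ} (v : ℤ → Fin r → ℂ) (c s : ℤ) (h3 : s = r - c)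
    (hT : DS v (UU (1 - s) c (s + 1) (r - c)) ≠ 0) :
    (DS v (UU (1 - s) (c - 1) (s + 1) (r - c + 1)) * DS v (UU (1 - s) c s (r - c - 1))) /
      (DS v (UU (1 - s) (c - 1) s (r - c)) * DS v (UU (1 - s) c (s + 1) (r - c))) =
      fS v c s := by
  have e1 : UU (1 - s) c s (r - c - 1) = UU (1 - s) c (s + 1) (r - c) := by
    ext t; simp only [mem_UU]; omega
  have e2 : UU (1 - s) (c - 1) (s + 1) (r - c + 1)
      = insert (r - c + 1 : ℤ) (UU (1 - s) (c - 1) s (r - c - 1)) := by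
    ext t; simp only [Finset.mem_insert, mem_UU]; omega
  unfold fS
  rw [e1, e2, mul_div_mul_right _ _ hT]

theorem stepB_s16 {r : ℕ} (v : ℤ → Fin r → ℂ) (c s : ℤ) (h1 : 1 - s < c) (h2 : c < s) (h3 : s ≤ r - c)
    (hS : DS v (UU (1 - s) (c - 1) s (r - c)) ≠ 0) (hT : DS v (UU (2 - s) c s (r - c)) ≠ 0) :
    (DS v (UU (2 - s) (c - 1) s (r - c + 1)) * DS v (UU (1 - s) c s (r - c - 1))) /
      (DS v (UU (2 - s) c s (r - c)) * DS v (UU (1 - s) (c - 1) s (r - c))) =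
      fT v c (s - 1) - fS v c s := by
  have hcard := card_UU (2 - s) (c - 1) s (r - c - 1) (by omega) (by omega) (by omega)
  have key := DS_three v (UU (2 - s) (c - 1) s (r - c - 1)) (1 - s) c (r - c) (r - c + 1)
    (by rw [mem_UU]; omega) (by rw [mem_UU]; omega) (by rw [mem_UU]; omega)
    (by rw [mem_UU]; omega) (by omega) (by omega) (by omega) (by omega)
  unfold fS fT
  rw [show (1 - (s - 1) : ℤ) = 2 - s by ring, show s - 1 + 1 = s by ring]
  have e1 : insert (1 - s) (insert (r - c : ℤ) (UU (2 - s) (c - 1) s (r - c - 1)))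
      = UU (1 - s) (c - 1) s (r - c) := by
    ext t; simp only [Finset.mem_insert, mem_UU]; omega
  have e2 : insert c (insert (r - c + 1 : ℤ) (UU (2 - s) (c - 1) s (r - c - 1)))
      = insert (r - c + 1 : ℤ) (UU (2 - s) c s (r - c - 1)) := by
    ext t; simp only [Finset.mem_insert, mem_UU]; omega
  have e3 : insert (1 - s) (insert c (UU (2 - s) (c - 1) s (r - c - 1)))
      = UU (1 - s) c s (r - c - 1) := by
    ext t; simp only [Finset.mem_insert, mem_UU]; omega
  have e4 : insert (r - c : ℤ) (insert (r - c + 1 : ℤ) (UU (2 - s) (c - 1) s (r - c - 1)))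
      = UU (2 - s) (c - 1) s (r - c + 1) := by
    ext t; simp only [Finset.mem_insert, mem_UU]; omega
  have e5 : insert (1 - s) (insert (r - c + 1 : ℤ) (UU (2 - s) (c - 1) s (r - c - 1)))
      = insert (r - c + 1 : ℤ) (UU (1 - s) (c - 1) s (r - c - 1)) := by
    ext t; simp only [Finset.mem_insert, mem_UU]; omega
  have e6 : insert c (insert (r - c : ℤ) (UU (2 - s) (c - 1) s (r - c - 1)))
      = UU (2 - s) c s (r - c) := by
    ext t; simp only [Finset.mem_insert, mem_UU]; omega
  rw [e1, e2, e3, e4, e5, e6] at key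
  rw [div_sub_div _ _ hT hS]
  congr 1
  linear_combination (-1 : ℂ) * key

theorem fS_zero (n r : ℕ) (hn : 0 < n) (A : Matrix (Fin r) (ZMod n) ℂ) (c s : ℤ)
    (h1 : 1 - s < c) (h2 : c < s) (h3 : s ≤ r - c) (hw : (r : ℤ) - c + 1 = 1 - s + n) :
    fS (vv n r A) c s = 0 := by
  have hcard := card_UU (2 - s) (c - 1) s (r - c - 1) (by omega) (by omega) (by omega)
  have e5 : insert (1 - s) (insert (r - c + 1 : ℤ) (UU (2 - s) (c - 1) s (r - c - 1)))
      = insert (r - c + 1 : ℤ) (UU (1 - s) (c - 1) s (r - c - 1)) := by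
    ext t; simp only [Finset.mem_insert, mem_UU]; omega
  unfold fS
  rw [← e5, DS_insert2 _ _ _ _ (by rw [mem_UU]; omega) (by rw [mem_UU]; omega) (by omega)
    (by omega), DL_same _ _ _ _ ((-1 : ℂ) ^ (r - 1)) (by omega)]
  · simp
  · intro t
    rw [hw]
    exact vv_add n r hn A _ t

theorem tele (G : ℕ → ℂ) (a b : ℕ) (h : a ≤ b) :
    ∑ i ∈ Finset.Ico a b, (G i - G (i + 1)) = G a - G b := by
  induction b, h using Nat.le_induction with
  | base => simp
  | succ b hb ih => rw [Finset.sum_Ico_succ_top hb, ih]; ring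

/-- the upward-diagonal superpotential term formula for the
checkboard graph, for `−⌊(k−2)/2⌋ ≤ c ≤ ⌈(n−k−2)/2⌉`. -/
theorem superpotential_term_upward
    (n k : ℕ) (hn : 4 ≤ n) (hk : 2 ≤ k) (hkn : k ≤ n - 2)
    (A : Matrix (Fin (n - k)) (ZMod n) ℂ)
    (hy : ∀ i ≤ n - k, ∀ j ≤ k, ych k n A i j ≠ 0)
    (c : ℤ) (hc1 : -(((k - 2) / 2 : ℕ) : ℤ) ≤ c) (hc2 : c ≤ (((n - k - 2 + 1) / 2 : ℕ) : ℤ)) :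
    plucker n (n - k) A (Jplus n k ((((n : ℤ) - c : ℤ)) : ZMod n)) /
        plucker n (n - k) A (Jcyc n k ((((n : ℤ) - c : ℤ)) : ZMod n)) =
      sumA k n (ych k n A) (2 * c - 1) + sumB k n (ych k n A) (2 * c - 1) := by
  have hn0 : 0 < n := by omega
  have hkn' : k ≤ n := by omega
  obtain ⟨lo, hlo⟩ : ∃ lo : ℕ, (1 ≤ c ∧ lo = 1) ∨ (c ≤ 0 ∧ (lo : ℤ) = 1 - 2 * c) := by
    by_cases h : 1 ≤ c
    · exact ⟨1, Or.inl ⟨h, rfl⟩⟩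
    · exact ⟨(1 - 2 * c).toNat, Or.inr (by omega)⟩
  obtain ⟨hi, hhi⟩ : ∃ hi : ℕ, ((k : ℤ) ≤ n - k - 2 * c ∧ hi = k) ∨
      ((n : ℤ) - k - 2 * c < k ∧ (hi : ℤ) = n - k - 2 * c) := by
    by_cases h : (k : ℤ) ≤ n - k - 2 * c
    · exact ⟨k, Or.inl ⟨h, rfl⟩⟩
    · exact ⟨((n : ℤ) - k - 2 * c).toNat, Or.inr (by omega)⟩
  have hlohi : lo ≤ hi := by omega
  have hr : ((n - k : ℕ) : ℤ) = n - k := by omega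
  set v := vv n (n - k) A with hv
  -- values of y
  have y1 : ∀ a b : ℕ, (a : ℤ) - b = 2 * c - 1 → a ≤ n - k → b ≤ k →
      ych k n A a b = DS v (UU (1 - (b + c)) (c - 1) (b + c) ((n - k : ℕ) - c)) := by
    intro a b h h1 h2
    apply ych_eq' k n hkn' hn0 A a b h1 h2 (b + c) <;> omega
  have y2 : ∀ a b : ℕ, (a : ℤ) - b = 2 * c - 1 → a + 1 ≤ n - k → b ≤ k →
      ych k n A (a + 1) b = DS v (UU (1 - (b + c)) c (b + c + 1) ((n - k : ℕ) - c)) := by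
    intro a b h h1 h2
    apply ych_eq' k n hkn' hn0 A _ b h1 h2 (b + c) <;> omega
  have y3 : ∀ a b : ℕ, (a : ℤ) - b = 2 * c - 1 → a + 1 ≤ n - k → 1 ≤ b → b ≤ k →
      ych k n A (a + 1) (b - 1) = DS v (UU (1 - (b + c)) c (b + c) ((n - k : ℕ) - c - 1)) := by
    intro a b h h1 h2 h3
    apply ych_eq' k n hkn' hn0 A _ _ h1 (by omega) (b + c) <;> omega
  have y4 : ∀ a b : ℕ, (a : ℤ) - b = 2 * c - 1 → a ≤ n - k → b + 1 ≤ k →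
      ych k n A a (b + 1) = DS v (UU (1 - (b + c)) (c - 1) (b + c + 1) ((n - k : ℕ) - c + 1)) := by
    intro a b h h1 h2
    apply ych_eq' k n hkn' hn0 A _ _ h1 h2 (b + c) <;> omega
  have y5 : ∀ a b : ℕ, (a : ℤ) - b = 2 * c - 1 → 1 ≤ a → a ≤ n - k → b ≤ k →
      ych k n A (a - 1) b = DS v (UU (2 - (b + c)) (c - 1) (b + c) ((n - k : ℕ) - c + 1)) := by
    intro a b h h0 h1 h2
    apply ych_eq' k n hkn' hn0 A _ _ (by omega) h2 (b + c - 1) <;> omega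
  have y6 : ∀ a b : ℕ, (a : ℤ) - b = 2 * c - 1 → a ≤ n - k → 1 ≤ b → b ≤ k →
      ych k n A a (b - 1) = DS v (UU (2 - (b + c)) c (b + c) ((n - k : ℕ) - c)) := by
    intro a b h h1 h2 h3
    apply ych_eq' k n hkn' hn0 A _ _ h1 (by omega) (b + c - 1) <;> omega
  -- the target
  set tg : ℂ := DS v (insert (((n - k : ℕ) : ℤ) - c + 1) (Finset.Icc (1 - c) ((n - k : ℕ) - c - 1))) /
    DS v (Finset.Icc (1 - c) ((n - k : ℕ) - c)) with htg
  have hL : plucker n (n - k) A (Jplus n k ((((n : ℤ) - c : ℤ)) : ZMod n)) /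
        plucker n (n - k) A (Jcyc n k ((((n : ℤ) - c : ℤ)) : ZMod n)) = tg := by
    have key0 : ∀ t : ℤ, (((n : ℤ) - c : ℤ) : ZMod n) + (t : ZMod n) = ((t - c : ℤ) : ZMod n) := by
      intro t; push_cast; rw [ZMod.natCast_self]; ring
    have key : ∀ t : ℕ, (((n : ℤ) - c : ℤ) : ZMod n) + (t : ZMod n) = ((t - c : ℤ) : ZMod n) := by
      intro t
      have h := key0 t
      rwa [Int.cast_natCast] at h
    have keyinj : ∀ a b : ℤ, 1 - c ≤ a → a ≤ n - c → 1 - c ≤ b → b ≤ n - c →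
        (a : ZMod n) = b → a = b := by
      intro a b h1 h2 h3 h4 h
      rw [ZMod.intCast_eq_intCast_iff] at h
      obtain ⟨q, hq⟩ := h.dvd
      rcases lt_trichotomy q 0 with h | h | h
      · nlinarith
      · subst h; omega
      · nlinarith
    have hJ : Jcyc n k ((((n : ℤ) - c : ℤ)) : ZMod n) =
        (Finset.Icc (1 - c) ((n - k : ℕ) - c : ℤ)).image (fun t : ℤ => (t : ZMod n)) := by
      ext x
      simp only [Jcyc, Finset.mem_image, Finset.mem_Icc, key]
      constructor
      · rintro ⟨t, ht, rfl⟩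
        exact ⟨t - c, by omega, rfl⟩
      · rintro ⟨t, ht, rfl⟩
        exact ⟨(t + c).toNat, by omega, by congr 1; omega⟩
    have hJp : Jplus n k ((((n : ℤ) - c : ℤ)) : ZMod n) =
        (insert (((n - k : ℕ) : ℤ) - c + 1) (Finset.Icc (1 - c) ((n - k : ℕ) - c - 1 : ℤ))).image
          (fun t : ℤ => (t : ZMod n)) := by
      unfold Jplus
      rw [hJ, key, key, Finset.image_insert]
      congr 1
      · push_cast; ring
      · ext x
        simp only [Finset.mem_image, Finset.mem_Icc, Finset.mem_erase]
        constructor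
        · rintro ⟨h, t, ht, rfl⟩
          have : t ≠ ((n - k : ℕ) : ℤ) - c := fun h' => h (by rw [h'])
          exact ⟨t, by omega, rfl⟩
        · rintro ⟨t, ht, rfl⟩
          refine ⟨fun h => ?_, t, by omega, rfl⟩
          have := keyinj _ _ (by omega) (by omega) (by omega) (by omega) h
          omega
    rw [hJ, hJp, plucker_lift n (n - k) hn0 A (-c), plucker_lift n (n - k) hn0 A (-c)]
    · intro t ht
      rw [Finset.mem_Icc] at ht
      omega
    · simp; omega
    · intro t ht
      rw [Finset.mem_insert, Finset.mem_Icc] at ht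
      omega
    · rw [Finset.card_insert_of_notMem (by rw [Finset.mem_Icc]; omega)]
      simp
      omega
  have hT0 : 1 ≤ c → fT v c c = tg := by
    intro h
    unfold fT
    rw [htg]
    congr 2
    · ext t; simp only [Finset.mem_insert, mem_UU, Finset.mem_Icc]; omega
    · ext t; simp only [mem_UU, Finset.mem_Icc]; omega
  have hS0 : c ≤ 0 → fS v c (1 - c) = tg := by
    intro h
    unfold fS
    rw [htg]
    congr 2
    · ext t; simp only [Finset.mem_insert, mem_UU, Finset.mem_Icc]; omega
    · ext t; simp only [mem_UU, Finset.mem_Icc]; omega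
  rw [hL]
  set G : ℕ → ℂ := fun b => if hi + 1 ≤ b then 0 else if b ≤ lo then tg else fT v c (b + c - 1)
    with hG
  have hsA : sumA k n (ych k n A) (2 * c - 1) = ∑ b ∈ Finset.Ico lo (hi + 1),
      (fS v c (b + c) - G (b + 1)) := by
    have e : sumA k n (ych k n A) (2 * c - 1) = ∑ b ∈ (Finset.Ico lo (hi + 1)).filter
        (fun b : ℕ => b + 1 ≤ k), (fS v c (b + c) - G (b + 1)) := by
      unfold sumA
      refine Finset.sum_nbij' (fun p => p.2) (fun b : ℕ => (((b : ℤ) + 2 * c - 1).toNat, b)) ?_ ?_ ?_ ?_ ?_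
      · rintro ⟨a, b⟩ h
        simp only [Finset.mem_filter, Finset.mem_product, Finset.mem_range, Finset.mem_Icc,
          Finset.mem_Ico] at h ⊢
        omega
      · intro b h
        simp only [Finset.mem_filter, Finset.mem_product, Finset.mem_range, Finset.mem_Icc,
          Finset.mem_Ico] at h ⊢
        omega
      · rintro ⟨a, b⟩ h
        simp only [Finset.mem_filter, Finset.mem_product, Finset.mem_range, Finset.mem_Icc] at h
        refine Prod.ext ?_ rfl
        change ((b : ℤ) + 2 * c - 1).toNat = a
        omega
      · intro b h
        rfl
      · rintro ⟨a, b⟩ h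
        simp only [Finset.mem_filter, Finset.mem_product, Finset.mem_range, Finset.mem_Icc] at h ⊢
        have hab := h.2
        have hS := hy a (by omega) b (by omega)
        have hT := hy (a + 1) (by omega) b (by omega)
        rw [y1 a b hab (by omega) (by omega)] at hS
        rw [y2 a b hab (by omega) (by omega)] at hT
        rw [y1 a b hab (by omega) (by omega), y2 a b hab (by omega) (by omega),
          y3 a b hab (by omega) (by omega) (by omega), y4 a b hab (by omega) (by omega)]
        by_cases ha : a + 1 = n - k
        · rw [stepA_end v c (b + c) (by omega) hT, hG]
          simp only
          rw [if_pos (by omega), sub_zero]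
        · rw [stepA_s16 v c (b + c) (by omega) (by omega) (by omega) hS hT, hG]
          simp only
          rw [if_neg (by omega), if_neg (by omega)]
          congr 2
          push_cast; ring
    rw [e]
    apply Finset.sum_subset (Finset.filter_subset _ _)
    intro b hb hb'
    simp only [Finset.mem_filter, Finset.mem_Ico] at hb hb'
    rw [hG]
    simp only
    rw [if_pos (by omega), sub_zero]
    exact fS_zero n (n - k) hn0 A c (b + c) (by omega) (by omega) (by omega) (by omega)
  have hsB : sumB k n (ych k n A) (2 * c - 1) = ∑ b ∈ Finset.Ico lo (hi + 1),
      (G b - fS v c (b + c)) := by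
    have e : sumB k n (ych k n A) (2 * c - 1) = ∑ b ∈ (Finset.Ico lo (hi + 1)).filter
        (fun b : ℕ => 1 ≤ (b : ℤ) + 2 * c - 1), (G b - fS v c (b + c)) := by
      unfold sumB
      refine Finset.sum_nbij' (fun p => p.2) (fun b : ℕ => (((b : ℤ) + 2 * c - 1).toNat, b)) ?_ ?_ ?_ ?_ ?_
      · rintro ⟨a, b⟩ h
        simp only [Finset.mem_filter, Finset.mem_product, Finset.mem_Icc,
          Finset.mem_Ico] at h ⊢
        omega
      · intro b h
        simp only [Finset.mem_filter, Finset.mem_product, Finset.mem_Icc,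
          Finset.mem_Ico] at h ⊢
        omega
      · rintro ⟨a, b⟩ h
        simp only [Finset.mem_filter, Finset.mem_product, Finset.mem_Icc] at h
        refine Prod.ext ?_ rfl
        change ((b : ℤ) + 2 * c - 1).toNat = a
        omega
      · intro b h
        rfl
      · rintro ⟨a, b⟩ h
        simp only [Finset.mem_filter, Finset.mem_product, Finset.mem_Icc] at h ⊢
        have hab := h.2
        have hS := hy a (by omega) b (by omega)
        have hT := hy a (by omega) (b - 1) (by omega)
        rw [y1 a b hab (by omega) (by omega)] at hS
        rw [y6 a b hab (by omega) (by omega) (by omega)] at hT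
        rw [y1 a b hab (by omega) (by omega), y6 a b hab (by omega) (by omega) (by omega),
          y3 a b hab (by omega) (by omega) (by omega),
          y5 a b hab (by omega) (by omega) (by omega)]
        rw [stepB_s16 v c (b + c) (by omega) (by omega) (by omega) hS hT, hG]
        simp only
        rw [if_neg (by omega)]
        congr 1
        split_ifs with hb
        · have hb1 : b = 1 := by omega
          rw [← hT0 (by omega), hb1]
          congr 1
          push_cast; ring
        · rfl
    rw [e]
    apply Finset.sum_subset (Finset.filter_subset _ _)
    intro b hb hb'
    simp only [Finset.mem_filter, Finset.mem_Ico] at hb hb'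
    rw [hG]
    simp only
    rw [if_neg (by omega), if_pos (by omega), ← hS0 (by omega),
      show (b : ℤ) + c = 1 - c by omega, sub_self]
  rw [hsA, hsB, ← Finset.sum_add_distrib]
  have hfin : ∀ b ∈ Finset.Ico lo (hi + 1),
      fS v c (b + c) - G (b + 1) + (G b - fS v c (b + c)) = G b - G (b + 1) := by
    intro b _; ring
  rw [Finset.sum_congr rfl hfin, tele G lo (hi + 1) (by omega), hG]
  simp only
  rw [if_neg (by omega), if_pos (by omega), if_pos (by omega), sub_zero]
end
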